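/- Let B = A₀ ⊆ A₁ ⊆ ⋯ ⊆ A_{s-1} ⊆ A_s = A be a chain of subalgebras (with the same identity) of an Artin algebra A, and for each 1 ≤ i ≤ s let I_{i-1} be a two-sided ideal of A_{i-1} that is also a left ideal of A_i, where s is a positive integer. Suppose that I₀ = rad(B) is the Jacobson radical of B. If A is 1-syzygy-finite and A₁/(I_{s-1}⋯I₁) is B-syzygy-finite (for example, representation-finite), then the finitistic dimension of B is finite. (When s = 1 the quotient A₁/(I_{s-1}⋯I₁) is understood to be 0, so the hypothesis holds automatically.) -/

import Mathlib

universe u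

open TensorProduct

section Basic

variable (Λ : Type u) [Ring Λ]

/-- `ProjDimLE Λ n M` : the module `M` admits a projective resolution of length `≤ n`
by finitely generated projective `Λ`-modules. -/
def ProjDimLE : ℕ → ModuleCat.{u} Λ → Prop
  | 0, M => Module.Projective Λ M
  | n + 1, M => ∃ (P : ModuleCat.{u} Λ) (g : P →ₗ[Λ] M),
      Module.Projective Λ P ∧ Module.Finite Λ P ∧ Function.Surjective g ∧
      ProjDimLE n (ModuleCat.of Λ (LinearMap.ker g))

/-- The finitistic dimension of `Λ` (computed on finitely generated modules) is finite. -/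
def FinFinDim : Prop :=
  ∃ n : ℕ, ∀ M : ModuleCat.{u} Λ, Module.Finite Λ M →
    (∃ k : ℕ, ProjDimLE Λ k M) → ProjDimLE Λ n M

/-- A module is indecomposable. -/
def ModIndec (M : ModuleCat.{u} Λ) : Prop :=
  Nontrivial M ∧ ∀ N₁ N₂ : Submodule Λ M, IsCompl N₁ N₂ → N₁ = ⊥ ∨ N₂ = ⊥

/-- A class of modules has only finitely many isomorphism classes of indecomposables. -/
def ClassRepFinite (C : ModuleCat.{u} Λ → Prop) : Prop :=
  ∃ (k : ℕ) (N : Fin k → ModuleCat.{u} Λ),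
    ∀ M : ModuleCat.{u} Λ, C M → ModIndec Λ M → ∃ i, Nonempty (M ≃ₗ[Λ] N i)

/-- `Λ` is representation-finite. -/
def RepFinite : Prop :=
  ClassRepFinite Λ (fun M => Module.Finite Λ M)

/-- `X` belongs to `add N`: it is a direct summand of a finite direct sum of copies of `N`. -/
def InAdd (N X : ModuleCat.{u} Λ) : Prop :=
  ∃ (k : ℕ) (i : X →ₗ[Λ] (Fin k → N)) (p : (Fin k → N) →ₗ[Λ] X),
    p.comp i = LinearMap.id

/-- A submodule is superfluous (small). -/
def IsSuperfluous {M : ModuleCat.{u} Λ} (N : Submodule Λ M) : Prop :=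
  ∀ L : Submodule Λ M, L ⊔ N = ⊤ → L = ⊤

/-- `K` is (isomorphic to) the kernel of a projective cover of `M`, i.e. a first syzygy. -/
def IsSyzygyOf (K M : ModuleCat.{u} Λ) : Prop :=
  ∃ (P : ModuleCat.{u} Λ) (g : P →ₗ[Λ] M), Module.Projective Λ P ∧ Module.Finite Λ P ∧
    Function.Surjective g ∧ IsSuperfluous Λ (LinearMap.ker g) ∧
    Nonempty (K ≃ₗ[Λ] LinearMap.ker g)

/-- `K` is an `n`-th syzygy of `M`. -/
def IsNthSyzygy : ℕ → ModuleCat.{u} Λ → ModuleCat.{u} Λ → Prop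
  | 0, K, M => Nonempty (K ≃ₗ[Λ] M)
  | n + 1, K, M => ∃ K' : ModuleCat.{u} Λ, IsNthSyzygy n K' M ∧ IsSyzygyOf Λ K K'

/-- A class `C` of modules is `m`-syzygy-finite. -/
def MSyzygyFiniteClass (m : ℕ) (C : ModuleCat.{u} Λ → Prop) : Prop :=
  ∃ N : ModuleCat.{u} Λ, Module.Finite Λ N ∧
    ∀ X, C X → ∀ K, IsNthSyzygy Λ m K X → InAdd Λ N K

/-- A class `C` of modules is syzygy-finite. -/
def SyzygyFiniteClass (C : ModuleCat.{u} Λ → Prop) : Prop :=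
  ∃ m : ℕ, MSyzygyFiniteClass Λ m C

/-- `Λ` is 1-syzygy-finite. -/
def OneSyzygyFinite : Prop :=
  MSyzygyFiniteClass Λ 1 (fun X => Module.Finite Λ X)

/-- `Λ` is syzygy-finite. -/
def AlgSyzygyFinite : Prop :=
  SyzygyFiniteClass Λ (fun X => Module.Finite Λ X)

/-- The Jacobson radical of `Λ` (intersection of the maximal left ideals). -/
def jacobsonRad : Ideal Λ := sInf {I : Ideal Λ | I.IsMaximal}

end Basic

/-- The Jacobson radical of a subalgebra, as a subset of the ambient algebra. -/
def radSet {R A : Type u} [CommRing R] [Ring A] [Algebra R A] (S : Subalgebra R A) : Set A :=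
  Subtype.val '' ((jacobsonRad ↥S : Ideal ↥S) : Set ↥S)

section Rel

variable {R : Type u} [CommRing R] {B A : Type u} [Ring B] [Ring A]
  [Algebra R B] [Algebra R A] (φ : B →ₐ[R] A)

/-- The tensor product `A ⊗_B X` of the (A,B)-bimodule `A` with a left `A`-module `X`
(viewed as a `B`-module via `φ`), realized as a quotient of `A ⊗_R X`. -/
noncomputable def relTensor (X : ModuleCat.{u} A) : ModuleCat.{u} A :=
  letI : Module R X := Module.compHom X (algebraMap R A)
  ModuleCat.of A ((A ⊗[R] X) ⧸ Submodule.span A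
    {z : A ⊗[R] X | ∃ (a : A) (b : B) (x : X),
      z = (a * φ b) ⊗ₜ[R] x - a ⊗ₜ[R] (φ b • x)})

/-- `X` is `(A,B)`-projective: a direct summand of `A ⊗_B X`. -/
noncomputable def RelProjective (X : ModuleCat.{u} A) : Prop :=
  ∃ (i : X →ₗ[A] relTensor φ X) (p : relTensor φ X →ₗ[A] X), p.comp i = LinearMap.id

/-- The map `g` admits a `B`-linear map `h` with `g ∘ h ∘ g = g`
(this encodes `(A,B)`-exactness of the corresponding short exact sequence). -/
def RelSplitB {P X : ModuleCat.{u} A} (g : P →ₗ[A] X) : Prop :=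
  ∃ h : X →+ P, (∀ (b : B) (x : X), h (φ b • x) = φ b • h x) ∧
    ∀ p : P, g (h (g p)) = g p

/-- `RelProjDimLE φ n X` : `X` has an `(A,B)`-exact resolution of length `≤ n` by
finitely generated `(A,B)`-projective modules, i.e. relative projective dimension `≤ n`. -/
noncomputable def RelProjDimLE : ℕ → ModuleCat.{u} A → Prop
  | 0, X => RelProjective φ X
  | n + 1, X => ∃ (P : ModuleCat.{u} A) (g : P →ₗ[A] X),
      RelProjective φ P ∧ Module.Finite A P ∧ Function.Surjective g ∧ RelSplitB φ g ∧
      RelProjDimLE n (ModuleCat.of A (LinearMap.ker g))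

/-- Restriction of scalars along `φ` of an `A`-module, as an object of `ModuleCat B`. -/
def resMod (X : ModuleCat.{u} A) : ModuleCat.{u} B :=
  @ModuleCat.of B _ X _ (Module.compHom X φ.toRingHom)

/-- The right `B`-module structure on `A` induced by `φ`. -/
def rightModB : Module Bᵐᵒᵖ A :=
  Module.compHom A (RingHom.op φ.toRingHom)

end Rel

variable {R : Type u} [CommRing R] [IsArtinianRing R]
  {A : Type u} [Ring A] [Algebra R A] [Module.Finite R A]

/-!
Igusa–Todorov argument. Let `X` be a `B`-module of finite projective dimension. `Ω²X` is the kernel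
of a map between free `B`-modules and lies in `rad(B)ᵏ ⊆ Aᵏ`; since `rad(B)` is a left ideal of
`A₁`, this kernel is an `A₁`-submodule of `Aᵏ`. As `A · (I_{s-1} ⋯ I₁) ⊆ A₁`, it contains the
`A`-submodule `D` generated by `(I_{s-1} ⋯ I₁) · Ω²X`. Being a submodule of a free `A`-module, `D`
lies in `add` of a fixed module because `A` is 1-syzygy-finite, while `Ω²X / D` is a module over
`A₁ / (I_{s-1} ⋯ I₁)`, so that some fixed syzygy of it lies in `add` of a fixed module.

It remains to bound the projective dimension of the cokernels of monomorphisms `K → L` with `K` and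
`L` in a fixed `add V`. Stable isomorphism classes of finitely generated modules form a cancellative
monoid on which `Ω` acts additively. If the cokernel has finite projective dimension, some `ΩⁿK` and
`ΩⁿL` are stably isomorphic, and `n` can be chosen uniformly because the group generated by the
classes from `add V` is noetherian. Up to projective summands the map `ΩⁿK → ΩⁿL` is then an
endomorphism. By Fitting's lemma only its nilpotent part contributes to the cokernel; that part is a
summand of `ΩⁿK` of finite projective dimension, hence has one of finitely many projective
dimensions.
-/

section Summands

variable (Λ : Type u) [Ring Λ]

/-- `X` is isomorphic to a direct summand of `Y`. -/
def IsSummand (X Y : Type*) [AddCommGroup X] [Module Λ X] [AddCommGroup Y] [Module Λ Y] : Prop :=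
  ∃ (i : X →ₗ[Λ] Y) (p : Y →ₗ[Λ] X), p ∘ₗ i = LinearMap.id

/-- `X` belongs to `add N`. This is `InAdd` for modules that are not bundled in `ModuleCat`. -/
def MemAdd (N X : Type*) [AddCommGroup N] [Module Λ N] [AddCommGroup X] [Module Λ X] : Prop :=
  ∃ k : ℕ, IsSummand Λ X (Fin k → N)

variable {Λ}
variable {N X Y Z : Type*} [AddCommGroup N] [Module Λ N] [AddCommGroup X] [Module Λ X]
  [AddCommGroup Y] [Module Λ Y] [AddCommGroup Z] [Module Λ Z]

theorem isCompl_range_ker_of_bijective_comp {i : X →ₗ[Λ] Y} {p : Y →ₗ[Λ] Z}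
    (h : Function.Bijective (p ∘ₗ i)) : IsCompl (LinearMap.range i) (LinearMap.ker p) := by
  refine ⟨Submodule.disjoint_def.mpr ?_, codisjoint_iff_le_sup.mpr fun y _ => ?_⟩
  · rintro _ ⟨x, rfl⟩ hx
    rw [(map_eq_zero_iff (p ∘ₗ i) h.injective).mp hx, map_zero]
  · obtain ⟨x, hx⟩ := h.surjective (p y)
    refine Submodule.mem_sup.mpr ⟨i x, ⟨x, rfl⟩, y - i x, ?_, add_sub_cancel _ _⟩
    rw [LinearMap.mem_ker, map_sub, sub_eq_zero]
    exact hx.symm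

theorem exists_equiv_prod_ker_of_comp_eq_id {i : X →ₗ[Λ] Y} {p : Y →ₗ[Λ] X}
    (h : p ∘ₗ i = LinearMap.id) :
    ∃ e : Y ≃ₗ[Λ] LinearMap.ker p × X, p = LinearMap.snd Λ _ _ ∘ₗ e.toLinearMap :=
  have ⟨e, he⟩ := (LinearMap.exact_subtype_ker_map p).splitSurjectiveEquiv
    (LinearMap.ker p).subtype_injective ⟨i, h⟩
  ⟨e, he.2⟩

namespace IsSummand

theorem of_bijective_comp (i : X →ₗ[Λ] Y) (p : Y →ₗ[Λ] X) (h : Function.Bijective (p ∘ₗ i)) :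
    IsSummand Λ X Y :=
  ⟨i, (LinearEquiv.ofBijective _ h).symm.toLinearMap ∘ₗ p,
    LinearMap.ext (LinearEquiv.ofBijective _ h).symm_apply_apply⟩

theorem of_equiv (e : X ≃ₗ[Λ] Y) : IsSummand Λ X Y :=
  ⟨e, e.symm, LinearMap.ext e.symm_apply_apply⟩

theorem of_isCompl {U V : Submodule Λ X} (h : IsCompl U V) : IsSummand Λ U X :=
  ⟨U.subtype, U.projectionOnto V h, LinearMap.ext (Submodule.projectionOnto_apply_left h)⟩

theorem trans (hXY : IsSummand Λ X Y) (hYZ : IsSummand Λ Y Z) : IsSummand Λ X Z := by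
  obtain ⟨i, p, hpi⟩ := hXY
  obtain ⟨j, q, hqj⟩ := hYZ
  refine ⟨j ∘ₗ i, p ∘ₗ q, ?_⟩
  rw [LinearMap.comp_assoc, ← LinearMap.comp_assoc i, hqj, LinearMap.id_comp, hpi]

theorem injective (h : IsSummand Λ X Y) : ∃ i : X →ₗ[Λ] Y, Function.Injective i :=
  have ⟨i, _, hpi⟩ := h
  ⟨i, Function.LeftInverse.injective (LinearMap.congr_fun hpi)⟩

theorem surjective (h : IsSummand Λ X Y) : ∃ p : Y →ₗ[Λ] X, Function.Surjective p :=
  have ⟨_, p, hpi⟩ := h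
  ⟨p, Function.RightInverse.surjective (LinearMap.congr_fun hpi)⟩

theorem isNoetherian [IsNoetherian Λ Y] (h : IsSummand Λ X Y) : IsNoetherian Λ X :=
  have ⟨_, hi⟩ := h.injective
  isNoetherian_of_injective _ hi

theorem isArtinian [IsArtinian Λ Y] (h : IsSummand Λ X Y) : IsArtinian Λ X :=
  have ⟨_, hi⟩ := h.injective
  isArtinian_of_injective _ hi

theorem subsingleton [Subsingleton Y] (h : IsSummand Λ X Y) : Subsingleton X :=
  have ⟨_, hi⟩ := h.injective
  hi.subsingleton

end IsSummand

end Summands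

section KrullSchmidt

variable {Λ : Type u} [Ring Λ]

namespace ModIndec

variable {M : ModuleCat.{u} Λ}

theorem isSummand_equiv {X : Type*} [AddCommGroup X] [Module Λ X] [Nontrivial X]
    (hM : ModIndec Λ M) (h : IsSummand Λ X M) : Nonempty (X ≃ₗ[Λ] M) := by
  obtain ⟨i, p, hpi⟩ := h
  have hbij : Function.Bijective (p ∘ₗ i) := hpi ▸ Function.bijective_id
  have hcompl := isCompl_range_ker_of_bijective_comp hbij
  have hi : Function.Injective i := Function.Injective.of_comp (f := p) hbij.injective
  rcases hM.2 _ _ hcompl with h | h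
  · obtain ⟨x, hx⟩ := exists_ne (0 : X)
    rw [LinearMap.range_eq_bot] at h
    exact absurd (hi (by simp only [h, LinearMap.zero_apply])) hx
  · refine ⟨LinearEquiv.ofBijective i ⟨hi, LinearMap.range_eq_top.mp ?_⟩⟩
    simpa only [h, sup_bot_eq] using hcompl.sup_eq_top

variable [IsNoetherian Λ M] [IsArtinian Λ M]

theorem bijective_or_isNilpotent (hM : ModIndec Λ M) (f : Module.End Λ M) :
    Function.Bijective f ∨ IsNilpotent f := by
  obtain ⟨n, hn⟩ := Filter.eventually_atTop.mp f.eventually_isCompl_ker_pow_range_pow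
  rcases hM.2 _ _ (hn (n + 1) n.le_succ) with h | h
  · have hinj : Function.Injective (f ^ n * f) := pow_succ f n ▸ LinearMap.ker_eq_bot.mp h
    have hf : Function.Injective f := Function.Injective.of_comp (f := f ^ n) hinj
    exact .inl (IsArtinian.bijective_of_injective_endomorphism f hf)
  · exact .inr ⟨n + 1, LinearMap.range_eq_bot.mp h⟩

theorem bijective_or_bijective_of_add_eq_one (hM : ModIndec Λ M) {f g : Module.End Λ M}
    (h : f + g = 1) : Function.Bijective f ∨ Function.Bijective g := by
  refine (hM.bijective_or_isNilpotent f).imp_right fun hf => ?_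
  rw [← Module.End.isUnit_iff, eq_sub_of_add_eq' h]
  exact hf.isUnit_one_sub

theorem isSummand_or_isSummand_of_prod (hM : ModIndec Λ M) {Y Z : Type*} [AddCommGroup Y]
    [Module Λ Y] [AddCommGroup Z] [Module Λ Z] (h : IsSummand Λ M (Y × Z)) :
    IsSummand Λ M Y ∨ IsSummand Λ M Z := by
  obtain ⟨i, p, hpi⟩ := h
  have hsum : (p ∘ₗ .inl Λ Y Z) ∘ₗ (.fst Λ Y Z ∘ₗ i) + (p ∘ₗ .inr Λ Y Z) ∘ₗ (.snd Λ Y Z ∘ₗ i) =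
      (LinearMap.id : M →ₗ[Λ] M) := by
    ext x
    simp [← hpi, ← map_add]
  exact (hM.bijective_or_bijective_of_add_eq_one hsum).imp
    (.of_bijective_comp _ _) (.of_bijective_comp _ _)

theorem isSummand_of_memAdd (hM : ModIndec Λ M) {N : Type*} [AddCommGroup N] [Module Λ N]
    (h : MemAdd Λ N M) : IsSummand Λ M N := by
  obtain ⟨k, h⟩ := h
  induction k with
  | zero => exact absurd h.subsingleton (not_subsingleton_iff_nontrivial.mpr hM.1)
  | succ k ih =>
    have hprod := h.trans (.of_equiv (Fin.consLinearEquiv Λ fun _ : Fin (k + 1) => N).symm)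
    exact (hM.isSummand_or_isSummand_of_prod hprod).elim id ih

end ModIndec

/-- A class of modules closed under isomorphisms and finite direct sums. -/
structure IsAdditiveClass (Q : ModuleCat.{u} Λ → Prop) : Prop where
  of_equiv {X Y : Type u} [AddCommGroup X] [Module Λ X] [AddCommGroup Y] [Module Λ Y] :
    (X ≃ₗ[Λ] Y) → Q (.of Λ X) → Q (.of Λ Y)
  of_subsingleton {X : Type u} [AddCommGroup X] [Module Λ X] : Subsingleton X → Q (.of Λ X)
  prod {X Y : Type u} [AddCommGroup X] [Module Λ X] [AddCommGroup Y] [Module Λ Y] :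
    Q (.of Λ X) → Q (.of Λ Y) → Q (.of Λ (X × Y))

theorem exists_isCompl_ne_top_of_not_modIndec {M : ModuleCat.{u} Λ} [Nontrivial M]
    (hM : ¬ ModIndec Λ M) : ∃ U V : Submodule Λ M, IsCompl U V ∧ U ≠ ⊤ ∧ V ≠ ⊤ := by
  simp only [ModIndec, not_and, not_forall, not_or] at hM
  obtain ⟨U, V, h, hU, hV⟩ := hM inferInstance
  refine ⟨U, V, h, ?_, ?_⟩
  · rintro rfl
    exact hV (top_disjoint.mp h.disjoint)
  · rintro rfl
    exact hU (disjoint_top.mp h.disjoint)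

theorem IsAdditiveClass.of_forall_modIndec {Q : ModuleCat.{u} Λ → Prop} (hQ : IsAdditiveClass Q)
    (M : Type u) [AddCommGroup M] [Module Λ M] [IsArtinian Λ M]
    (h : ∀ X : ModuleCat.{u} Λ, ModIndec Λ X → IsSummand Λ X M → Q X) : Q (.of Λ M) := by
  suffices ∀ U : Submodule Λ M, IsSummand Λ U M → Q (.of Λ U) from
    hQ.of_equiv Submodule.topEquiv (this ⊤ (.of_equiv Submodule.topEquiv))
  intro U
  induction U using WellFoundedLT.induction with
  | ind U ih =>
  intro hU
  by_cases hindec : ModIndec Λ (.of Λ U)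
  · exact h _ hindec hU
  rcases subsingleton_or_nontrivial U with hU₀ | hU₀
  · exact hQ.of_subsingleton hU₀
  obtain ⟨V, W, hVW, hV, hW⟩ := exists_isCompl_ne_top_of_not_modIndec (M := .of Λ U) hindec
  have of_proper {V W : Submodule Λ U} (hVW : IsCompl V W) (hV : V ≠ ⊤) : Q (.of Λ V) := by
    let e := Submodule.equivMapOfInjective U.subtype U.subtype_injective V
    refine hQ.of_equiv e.symm (ih _ ?_ ((IsSummand.of_equiv e.symm).trans
      ((IsSummand.of_isCompl hVW).trans hU)))
    refine lt_of_le_of_ne (Submodule.map_subtype_le _ _) fun heq => hV ?_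
    apply Submodule.map_injective_of_injective U.subtype_injective
    rw [heq, Submodule.map_top, Submodule.range_subtype]
  exact hQ.of_equiv (Submodule.prodEquivOfIsCompl V W hVW)
    (hQ.prod (of_proper hVW hV) (of_proper hVW.symm hW))

theorem exists_list_modIndec_isSummand (W : Type u) [AddCommGroup W] [Module Λ W]
    [IsArtinian Λ W] : ∃ l : List (ModuleCat.{u} Λ), ∀ X : ModuleCat.{u} Λ,
      ModIndec Λ X → IsNoetherian Λ X → IsArtinian Λ X → IsSummand Λ X W →
      ∃ Y ∈ l, Nonempty (X ≃ₗ[Λ] Y) := by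
  refine IsAdditiveClass.of_forall_modIndec
    (Q := fun W => ∃ l : List (ModuleCat.{u} Λ), ∀ X : ModuleCat.{u} Λ, ModIndec Λ X →
      IsNoetherian Λ X → IsArtinian Λ X → IsSummand Λ X W → ∃ Y ∈ l, Nonempty (X ≃ₗ[Λ] Y))
    ⟨?_, ?_, ?_⟩ W fun M hM _ => ⟨[M], fun X hX _ _ h => ?_⟩
  · rintro V W _ _ _ _ e ⟨l, hl⟩
    exact ⟨l, fun X hX h₁ h₂ h => hl X hX h₁ h₂ (h.trans (.of_equiv e.symm))⟩
  · intro W _ _ _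
    exact ⟨[], fun X hX _ _ h =>
      absurd h.subsingleton (not_subsingleton_iff_nontrivial.mpr hX.1)⟩
  · rintro V W _ _ _ _ ⟨l, hl⟩ ⟨l', hl'⟩
    refine ⟨l ++ l', fun X hX h₁ h₂ h => ?_⟩
    simp only [List.mem_append, or_and_right, exists_or]
    exact (hX.isSummand_or_isSummand_of_prod h).imp (hl X hX h₁ h₂) (hl' X hX h₁ h₂)
  · have := hX.1
    exact ⟨M, List.mem_singleton_self M, hM.isSummand_equiv h⟩

theorem exists_list_isAdditiveClass_of_memAdd (W : Type u) [AddCommGroup W] [Module Λ W]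
    [IsNoetherian Λ W] [IsArtinian Λ W] : ∃ l : List (ModuleCat.{u} Λ),
      (∀ Y ∈ l, IsSummand Λ Y W) ∧
      ∀ Q : ModuleCat.{u} Λ → Prop, IsAdditiveClass Q → (∀ Y ∈ l, Q Y) →
      ∀ (X : Type u) [AddCommGroup X] [Module Λ X], MemAdd Λ W X → Q (.of Λ X) := by
  obtain ⟨l, hl⟩ := exists_list_modIndec_isSummand (Λ := Λ) W
  classical
  refine ⟨l.filter fun Y => IsSummand Λ Y W, by simp, fun Q hQ hQl X _ _ hX => ?_⟩
  obtain ⟨k, hk⟩ := hX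
  have := hk.isArtinian
  refine hQ.of_forall_modIndec X fun U hU hUX => ?_
  have hUk := hUX.trans hk
  have := hUk.isNoetherian
  have := hUk.isArtinian
  have hUW := hU.isSummand_of_memAdd ⟨k, hUk⟩
  obtain ⟨Y, hY, ⟨e⟩⟩ := hl U hU ‹_› ‹_› hUW
  refine hQ.of_equiv (X := Y) (Y := U) e.symm (hQl Y ?_)
  simpa only [List.mem_filter, decide_eq_true_eq] using
    ⟨hY, (IsSummand.of_equiv e.symm).trans hUW⟩

end KrullSchmidt

section Cancellation

variable {Λ : Type u} [Ring Λ]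

theorem nonempty_equiv_of_bijective_corner {M N X Y : Type*} [AddCommGroup M] [Module Λ M]
    [AddCommGroup N] [Module Λ N] [AddCommGroup X] [Module Λ X] [AddCommGroup Y] [Module Λ Y]
    (e : (M × X) ≃ₗ[Λ] (N × Y))
    (h : Function.Bijective (LinearMap.fst Λ N Y ∘ₗ e.toLinearMap ∘ₗ LinearMap.inl Λ M X)) :
    Nonempty (X ≃ₗ[Λ] Y) := by
  have hcompl : IsCompl (LinearMap.ker (LinearMap.snd Λ M X))
      (Submodule.comap e.toLinearMap (Submodule.snd Λ N Y)) := by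
    rw [← LinearMap.range_inl]
    exact isCompl_range_ker_of_bijective_comp
      (p := LinearMap.fst Λ N Y ∘ₗ e.toLinearMap) (by rwa [LinearMap.comp_assoc])
  exact ⟨(LinearMap.quotKerEquivOfSurjective _ LinearMap.snd_surjective).symm ≪≫ₗ
    Submodule.quotientEquivOfIsCompl _ _ hcompl ≪≫ₗ e.ofSubmodule' _ ≪≫ₗ Submodule.sndEquiv Λ N Y⟩

theorem ModIndec.nonempty_equiv_of_prod_equiv {M : ModuleCat.{u} Λ} [IsNoetherian Λ M]
    [IsArtinian Λ M] (hM : ModIndec Λ M) {X Y : Type*} [AddCommGroup X] [Module Λ X]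
    [AddCommGroup Y] [Module Λ Y] (e : (M × X) ≃ₗ[Λ] (M × Y)) : Nonempty (X ≃ₗ[Λ] Y) := by
  let i₁ : M →ₗ[Λ] M := .fst Λ M Y ∘ₗ e.toLinearMap ∘ₗ .inl Λ M X
  let i₂ : M →ₗ[Λ] Y := .snd Λ M Y ∘ₗ e.toLinearMap ∘ₗ .inl Λ M X
  let p₁ : M →ₗ[Λ] M := .fst Λ M X ∘ₗ e.symm.toLinearMap ∘ₗ .inl Λ M Y
  let p₂ : Y →ₗ[Λ] M := .fst Λ M X ∘ₗ e.symm.toLinearMap ∘ₗ .inr Λ M Y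
  have hsum : p₁ ∘ₗ i₁ + p₂ ∘ₗ i₂ = (LinearMap.id : M →ₗ[Λ] M) := by
    ext m
    have h : (e.symm ((e (m, 0)).1, 0) + e.symm (0, (e (m, 0)).2)).1 = m := by
      rw [← map_add, Prod.mk_add_mk, add_zero, zero_add, Prod.mk.eta, e.symm_apply_apply]
    exact h
  rcases hM.bijective_or_bijective_of_add_eq_one hsum with h | h
  · have hi₁ : Function.Injective i₁ := Function.Injective.of_comp (f := p₁) h.injective
    exact nonempty_equiv_of_bijective_corner e
      (IsArtinian.bijective_of_injective_endomorphism i₁ hi₁)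
  · let u := LinearEquiv.ofBijective _ h
    obtain ⟨f, hf⟩ := exists_equiv_prod_ker_of_comp_eq_id (i := i₂)
      (p := u.symm.toLinearMap ∘ₗ p₂) (LinearMap.ext fun m => u.symm_apply_apply m)
    -- Moving the copy of `M` found inside `Y` to the front makes the corner an isomorphism.
    let g := e ≪≫ₗ (LinearEquiv.refl Λ M).prodCongr (f ≪≫ₗ LinearEquiv.prodComm Λ _ _) ≪≫ₗ
      (LinearEquiv.prodAssoc Λ M M _).symm ≪≫ₗ
      (LinearEquiv.prodComm Λ M M).prodCongr (LinearEquiv.refl Λ _) ≪≫ₗ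
      LinearEquiv.prodAssoc Λ M M _
    have hg : LinearMap.fst Λ M _ ∘ₗ g.toLinearMap ∘ₗ LinearMap.inl Λ M X = LinearMap.id := by
      ext m
      have hm : (f (i₂ m)).2 = u.symm (p₂ (i₂ m)) := (LinearMap.congr_fun hf (i₂ m)).symm
      exact hm.trans (u.symm_apply_apply m)
    obtain ⟨v⟩ := nonempty_equiv_of_bijective_corner g (hg ▸ Function.bijective_id)
    exact ⟨v ≪≫ₗ LinearEquiv.prodComm Λ _ _ ≪≫ₗ f.symm⟩

theorem nonempty_equiv_of_prod_equiv_prod {M X Y : Type u} [AddCommGroup M] [Module Λ M]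
    [IsNoetherian Λ M] [IsArtinian Λ M] [AddCommGroup X] [Module Λ X] [AddCommGroup Y] [Module Λ Y]
    (e : (M × X) ≃ₗ[Λ] (M × Y)) : Nonempty (X ≃ₗ[Λ] Y) := by
  suffices ∀ (X Y : Type u) [AddCommGroup X] [Module Λ X] [AddCommGroup Y] [Module Λ Y],
      ((M × X) ≃ₗ[Λ] (M × Y)) → Nonempty (X ≃ₗ[Λ] Y) from this X Y e
  refine IsAdditiveClass.of_forall_modIndec
    (Q := fun M : ModuleCat.{u} Λ => ∀ (X Y : Type u) [AddCommGroup X] [Module Λ X]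
      [AddCommGroup Y] [Module Λ Y], ((M × X) ≃ₗ[Λ] (M × Y)) → Nonempty (X ≃ₗ[Λ] Y))
    ⟨?_, ?_, ?_⟩ M ?_
  · intro M N _ _ _ _ e hM X Y _ _ _ _ f
    exact hM X Y (e.prodCongr (.refl Λ X) ≪≫ₗ f ≪≫ₗ e.symm.prodCongr (.refl Λ Y))
  · intro M _ _ _ X Y _ _ _ _ f
    let : Unique M := uniqueOfSubsingleton 0
    exact ⟨LinearEquiv.uniqueProd.symm ≪≫ₗ f ≪≫ₗ LinearEquiv.uniqueProd⟩
  · intro M N _ _ _ _ hM hN X Y _ _ _ _ f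
    obtain ⟨g⟩ := hM _ _ ((LinearEquiv.prodAssoc Λ M N X).symm ≪≫ₗ f ≪≫ₗ
      LinearEquiv.prodAssoc Λ M N Y)
    exact hN X Y g
  · intro U hU hUM X Y _ _ _ _ f
    have := hUM.isNoetherian
    have := hUM.isArtinian
    exact hU.nonempty_equiv_of_prod_equiv f

end Cancellation

section ShortExactSequences

variable {Λ : Type u} [Ring Λ]

/-- The sequence `0 → K → L → M → 0` with maps `i` and `g` is exact. -/
structure IsSES {K L M : Type*} [AddCommGroup K] [Module Λ K] [AddCommGroup L] [Module Λ L]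
    [AddCommGroup M] [Module Λ M] (i : K →ₗ[Λ] L) (g : L →ₗ[Λ] M) : Prop where
  injective : Function.Injective i
  surjective : Function.Surjective g
  exact : Function.Exact i g

namespace IsSES

variable {K L M N Z P Q X : Type*} [AddCommGroup K] [Module Λ K] [AddCommGroup L] [Module Λ L]
  [AddCommGroup M] [Module Λ M] [AddCommGroup N] [Module Λ N] [AddCommGroup Z] [Module Λ Z]
  [AddCommGroup P] [Module Λ P] [AddCommGroup Q] [Module Λ Q] [AddCommGroup X] [Module Λ X]
  {i : K →ₗ[Λ] L} {g : L →ₗ[Λ] M} {j : Z →ₗ[Λ] P} {q : P →ₗ[Λ] M}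

theorem of_surjective (h : Function.Surjective g) : IsSES (LinearMap.ker g).subtype g :=
  ⟨Submodule.injective_subtype _, h, LinearMap.exact_subtype_ker_map g⟩

theorem of_submodule (U : Submodule Λ L) : IsSES U.subtype U.mkQ :=
  ⟨U.injective_subtype, U.mkQ_surjective, LinearMap.exact_subtype_mkQ U⟩

theorem comp_apply (h : IsSES i g) (x : K) : g (i x) = 0 :=
  h.exact.apply_apply_eq_zero x

theorem exists_of_eq_zero (h : IsSES i g) {y : L} (hy : g y = 0) : ∃ x, i x = y :=
  (h.exact y).mp hy

theorem of_forall (hi : Function.Injective i) (hg : Function.Surjective g)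
    (h₀ : ∀ x, g (i x) = 0) (he : ∀ y, g y = 0 → ∃ x, i x = y) : IsSES i g :=
  ⟨hi, hg, fun y => ⟨he y, by rintro ⟨x, rfl⟩; exact h₀ x⟩⟩

theorem equiv_left (h : IsSES i g) (e : N ≃ₗ[Λ] K) : IsSES (i ∘ₗ e.toLinearMap) g := by
  refine .of_forall (h.injective.comp e.injective) h.surjective (fun x => h.comp_apply (e x))
    fun y hy => ?_
  obtain ⟨x, rfl⟩ := h.exists_of_eq_zero hy
  exact ⟨e.symm x, congrArg i (e.apply_symm_apply x)⟩

theorem equiv_right (h : IsSES i g) (e : M ≃ₗ[Λ] N) : IsSES i (e.toLinearMap ∘ₗ g) :=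
  .of_forall h.injective (e.surjective.comp h.surjective)
    (fun x => e.map_eq_zero_iff.mpr (h.comp_apply x))
    fun _ hy => h.exists_of_eq_zero (e.map_eq_zero_iff.mp hy)

theorem equiv_middle (h : IsSES i g) (e : L ≃ₗ[Λ] N) :
    IsSES (e.toLinearMap ∘ₗ i) (g ∘ₗ e.symm.toLinearMap) := by
  refine .of_forall (e.injective.comp h.injective) (h.surjective.comp e.symm.surjective)
    (fun x => ?_) fun y hy => ?_
  · exact (congrArg g (e.symm_apply_apply (i x))).trans (h.comp_apply x)
  · obtain ⟨x, hx⟩ := h.exists_of_eq_zero hy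
    exact ⟨x, e.symm.injective ((e.symm_apply_apply (i x)).trans hx)⟩

theorem prodMap {i' : Z →ₗ[Λ] P} {g' : P →ₗ[Λ] Q} (h : IsSES i g) (h' : IsSES i' g') :
    IsSES (i.prodMap i') (g.prodMap g') := by
  refine .of_forall (h.injective.prodMap h'.injective) (h.surjective.prodMap h'.surjective)
    (fun x => Prod.ext (h.comp_apply x.1) (h'.comp_apply x.2)) fun y hy => ?_
  obtain ⟨a, ha⟩ := h.exists_of_eq_zero (congrArg Prod.fst hy)
  obtain ⟨b, hb⟩ := h'.exists_of_eq_zero (congrArg Prod.snd hy)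
  exact ⟨(a, b), Prod.ext ha hb⟩

variable (N) in
theorem prod_middle_right (h : IsSES i g) :
    IsSES (LinearMap.inl Λ L N ∘ₗ i) (g.prodMap (LinearMap.id : N →ₗ[Λ] N)) := by
  refine .of_forall (LinearMap.inl_injective.comp h.injective)
    (h.surjective.prodMap Function.surjective_id)
    (fun x => Prod.ext (h.comp_apply x) rfl) fun y hy => ?_
  obtain ⟨x, hx⟩ := h.exists_of_eq_zero (congrArg Prod.fst hy)
  exact ⟨x, Prod.ext hx (congrArg Prod.snd hy).symm⟩

variable (N) in
theorem prod_left_middle (h : IsSES i g) :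
    IsSES (i.prodMap (LinearMap.id : N →ₗ[Λ] N)) (g ∘ₗ LinearMap.fst Λ L N) := by
  refine .of_forall (h.injective.prodMap Function.injective_id)
    (h.surjective.comp LinearMap.fst_surjective) (fun x => h.comp_apply x.1) fun y hy => ?_
  obtain ⟨x, hx⟩ := h.exists_of_eq_zero hy
  exact ⟨(x, y.2), Prod.ext hx rfl⟩

theorem exists_lift (h : IsSES i g) (f : N →ₗ[Λ] L) (hf : g ∘ₗ f = 0) :
    ∃ k : N →ₗ[Λ] K, i ∘ₗ k = f := by
  have hrange (x : N) : f x ∈ LinearMap.range i := h.exists_of_eq_zero (LinearMap.congr_fun hf x)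
  let e := LinearEquiv.ofInjective i h.injective
  exact ⟨e.symm.toLinearMap ∘ₗ f.codRestrict _ hrange,
    LinearMap.ext fun x => congrArg Subtype.val (e.apply_symm_apply ⟨f x, hrange x⟩)⟩

theorem nonempty_equiv_prod (h : IsSES i g) [Module.Projective Λ M] :
    Nonempty (L ≃ₗ[Λ] K × M) := by
  obtain ⟨s, hs⟩ := Module.projective_lifting_property g LinearMap.id h.surjective
  exact ⟨(h.exact.splitSurjectiveEquiv h.injective ⟨s, hs⟩).1⟩

theorem rotate [Module.Projective Λ P] (h : IsSES i g) (hq : IsSES j q) :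
    ∃ (a : Z →ₗ[Λ] K × P) (b : K × P →ₗ[Λ] L), IsSES a b := by
  obtain ⟨l, hl⟩ := Module.projective_lifting_property g q h.surjective
  obtain ⟨k, hk⟩ := h.exists_lift (l ∘ₗ j) (by
    rw [← LinearMap.comp_assoc, hl]
    exact LinearMap.ext hq.comp_apply)
  replace hl : ∀ x, g (l x) = q x := LinearMap.congr_fun hl
  replace hk : ∀ z, i (k z) = l (j z) := LinearMap.congr_fun hk
  refine ⟨(-k).prod j, i.coprod l, .of_forall ?_ ?_ ?_ ?_⟩
  · exact fun x y hxy => hq.injective (congrArg Prod.snd hxy)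
  · intro y
    obtain ⟨p, hp⟩ := hq.surjective (g y)
    obtain ⟨x, hx⟩ := h.exists_of_eq_zero (y := y - l p) (by rw [map_sub, hl, hp, sub_self])
    exact ⟨(x, p), by rw [LinearMap.coprod_apply, hx, sub_add_cancel]⟩
  · intro z
    simp [hk]
  · rintro ⟨x, p⟩ hxp
    replace hxp : i x + l p = 0 := hxp
    have hp : q p = 0 := by simpa [h.comp_apply, hl] using congrArg g hxp
    obtain ⟨z, rfl⟩ := hq.exists_of_eq_zero hp
    refine ⟨z, Prod.ext (h.injective ?_) rfl⟩
    rw [eq_neg_of_add_eq_zero_left hxp, ← hk, ← map_neg]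
    rfl

theorem schanuel [Module.Projective Λ L] [Module.Projective Λ P] (h : IsSES i g)
    (hq : IsSES j q) : Nonempty ((K × P) ≃ₗ[Λ] Z × L) :=
  have ⟨_, _, hab⟩ := h.rotate hq
  hab.nonempty_equiv_prod

theorem exists_ker_comp {b : M →ₗ[Λ] N} {a : X →ₗ[Λ] M} (h : IsSES i g) (hab : IsSES a b) :
    ∃ (i' : K →ₗ[Λ] LinearMap.ker (b ∘ₗ g)) (g' : LinearMap.ker (b ∘ₗ g) →ₗ[Λ] X),
      IsSES i' g' := by
  obtain ⟨g', hg'⟩ := hab.exists_lift (g ∘ₗ (LinearMap.ker (b ∘ₗ g)).subtype)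
    (LinearMap.ext fun x => x.2)
  replace hg' : ∀ x, a (g' x) = g x := LinearMap.congr_fun hg'
  refine ⟨i.codRestrict _ fun x => ?_, g', .of_forall ?_ ?_ ?_ ?_⟩
  · rw [LinearMap.mem_ker, LinearMap.comp_apply, h.comp_apply, map_zero]
  · exact fun x y hxy => h.injective (congrArg Subtype.val hxy)
  · intro x
    obtain ⟨y, hy⟩ := h.surjective (a x)
    have hy' : b (g y) = 0 := hy ▸ hab.comp_apply x
    exact ⟨⟨y, hy'⟩, hab.injective ((hg' _).trans hy)⟩
  · exact fun x => hab.injective ((hg' _).trans ((h.comp_apply x).trans (map_zero a).symm))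
  · intro y hy
    obtain ⟨x, hx⟩ := h.exists_of_eq_zero (y := y.1) (by rw [← hg', hy, map_zero])
    exact ⟨x, Subtype.ext hx⟩

theorem horseshoe [Module.Projective Λ Q] (h : IsSES i g) {q : P →ₗ[Λ] K} (hq : IsSES j q)
    {k : X →ₗ[Λ] Q} {r : Q →ₗ[Λ] M} (hr : IsSES k r) :
    ∃ (f : P × Q →ₗ[Λ] L) (a : Z →ₗ[Λ] LinearMap.ker f) (b : LinearMap.ker f →ₗ[Λ] X),
      Function.Surjective f ∧ IsSES a b := by
  obtain ⟨_, f, hf⟩ := h.rotate hr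
  have hqQ := hq.prod_middle_right Q
  obtain ⟨a, b, hab⟩ := hqQ.exists_ker_comp hf
  exact ⟨_, a, b, hf.surjective.comp hqQ.surjective, hab⟩

end IsSES

end ShortExactSequences

section WeakSyzygies

variable (Λ : Type u) [Ring Λ]

/-- `K` is the kernel of an epimorphism onto `M` from a finitely generated projective module.
Unlike in `IsSyzygyOf`, the epimorphism need not be a projective cover, so that `K` is determined
by `M` only up to finitely generated projective summands. -/
def IsWeakSyzygy (K M : Type u) [AddCommGroup K] [Module Λ K] [AddCommGroup M] [Module Λ M] :
    Prop :=
  ∃ (P : Type u) (_ : AddCommGroup P) (_ : Module Λ P) (_ : Module.Projective Λ P)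
    (_ : Module.Finite Λ P) (j : K →ₗ[Λ] P) (q : P →ₗ[Λ] M), IsSES j q

/-- `K` is obtained from `M` by taking weak syzygies `n` times. -/
def IsWeakNthSyzygy : ℕ → ∀ (K M : Type u) [AddCommGroup K] [Module Λ K] [AddCommGroup M]
    [Module Λ M], Prop
  | 0, K, M, _, _, _, _ => Nonempty (K ≃ₗ[Λ] M)
  | n + 1, K, M, _, _, _, _ => ∃ (K' : Type u) (_ : AddCommGroup K') (_ : Module Λ K'),
      IsWeakNthSyzygy n K' M ∧ IsWeakSyzygy Λ K K'

variable {Λ}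
variable {K L M N K' M' : Type u} [AddCommGroup K] [Module Λ K] [AddCommGroup L] [Module Λ L]
  [AddCommGroup M] [Module Λ M] [AddCommGroup N] [Module Λ N]
  [AddCommGroup K'] [Module Λ K'] [AddCommGroup M'] [Module Λ M']

namespace IsWeakSyzygy

theorem of_surjective {P : Type u} [AddCommGroup P] [Module Λ P] [Module.Projective Λ P]
    [Module.Finite Λ P] {g : P →ₗ[Λ] M} (h : Function.Surjective g) :
    IsWeakSyzygy Λ (LinearMap.ker g) M :=
  ⟨P, _, _, ‹_›, ‹_›, _, g, .of_surjective h⟩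

theorem exists_of_finite (M : Type u) [AddCommGroup M] [Module Λ M] [Module.Finite Λ M] :
    ∃ (K : Type u) (_ : AddCommGroup K) (_ : Module Λ K), IsWeakSyzygy Λ K M :=
  have ⟨_, _, hg⟩ := Module.Finite.exists_fin' Λ M
  ⟨_, _, _, of_surjective hg⟩

theorem finite [IsNoetherianRing Λ] (h : IsWeakSyzygy Λ K M) : Module.Finite Λ K :=
  have ⟨_, _, _, _, _, j, _, hjq⟩ := h
  Module.Finite.of_injective j hjq.injective

theorem prod (h : IsWeakSyzygy Λ K M) (h' : IsWeakSyzygy Λ K' M') :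
    IsWeakSyzygy Λ (K × K') (M × M') :=
  have ⟨_, _, _, _, _, _, _, hjq⟩ := h
  have ⟨_, _, _, _, _, _, _, hjq'⟩ := h'
  ⟨_, _, _, inferInstance, inferInstance, _, _, hjq.prodMap hjq'⟩

end IsWeakSyzygy

namespace IsWeakNthSyzygy

theorem finite [IsNoetherianRing Λ] [Module.Finite Λ M] {n : ℕ} (h : IsWeakNthSyzygy Λ n K M) :
    Module.Finite Λ K := by
  cases n with
  | zero => exact have ⟨e⟩ := h; Module.Finite.equiv e.symm
  | succ n => exact have ⟨_, _, _, _, hK⟩ := h; hK.finite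

theorem exists_of_finite [IsNoetherianRing Λ] (n : ℕ) (M : Type u) [AddCommGroup M] [Module Λ M]
    [Module.Finite Λ M] :
    ∃ (K : Type u) (_ : AddCommGroup K) (_ : Module Λ K), IsWeakNthSyzygy Λ n K M := by
  induction n with
  | zero => exact ⟨M, _, _, ⟨.refl Λ M⟩⟩
  | succ n ih =>
    obtain ⟨K, _, _, hK⟩ := ih
    have := hK.finite
    obtain ⟨K', _, _, hK'⟩ := IsWeakSyzygy.exists_of_finite (Λ := Λ) K
    exact ⟨K', _, _, K, _, _, hK, hK'⟩

theorem horseshoe {n : ℕ} {i : K →ₗ[Λ] L} {g : L →ₗ[Λ] M} (h : IsSES i g)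
    (hK : IsWeakNthSyzygy Λ n K' K) (hM : IsWeakNthSyzygy Λ n M' M) :
    ∃ (L' : Type u) (_ : AddCommGroup L') (_ : Module Λ L') (i' : K' →ₗ[Λ] L')
      (g' : L' →ₗ[Λ] M'), IsWeakNthSyzygy Λ n L' L ∧ IsSES i' g' := by
  induction n generalizing K' M' with
  | zero =>
    obtain ⟨e⟩ := hK
    obtain ⟨f⟩ := hM
    exact ⟨L, _, _, _, _, ⟨.refl Λ L⟩, (h.equiv_left e).equiv_right f.symm⟩
  | succ n ih =>
    obtain ⟨K₁, _, _, hK₁, P, _, _, _, _, j, q, hjq⟩ := hK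
    obtain ⟨M₁, _, _, hM₁, Q, _, _, _, _, k, r, hkr⟩ := hM
    obtain ⟨L₁, _, _, i₁, g₁, hL₁, h₁⟩ := ih hK₁ hM₁
    obtain ⟨f, a, b, hf, hab⟩ := h₁.horseshoe hjq hkr
    exact ⟨_, _, _, a, b, ⟨L₁, _, _, hL₁, .of_surjective hf⟩, hab⟩

end IsWeakNthSyzygy

end WeakSyzygies

section StableClasses

variable {Λ : Type u} [Ring Λ]

section StabIso

variable (Λ) in
/-- `M` and `N` become isomorphic after adding finitely generated projective modules. -/
def StabIso (M N : Type u) [AddCommGroup M] [Module Λ M] [AddCommGroup N] [Module Λ N] : Prop :=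
  ∃ (P Q : Type u) (_ : AddCommGroup P) (_ : Module Λ P) (_ : AddCommGroup Q) (_ : Module Λ Q)
    (_ : Module.Projective Λ P) (_ : Module.Finite Λ P) (_ : Module.Projective Λ Q)
    (_ : Module.Finite Λ Q), Nonempty ((M × P) ≃ₗ[Λ] (N × Q))

variable {L M N M' N' K K' : Type u} [AddCommGroup L] [Module Λ L] [AddCommGroup M] [Module Λ M]
  [AddCommGroup N] [Module Λ N] [AddCommGroup M'] [Module Λ M'] [AddCommGroup N'] [Module Λ N']
  [AddCommGroup K] [Module Λ K] [AddCommGroup K'] [Module Λ K']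

namespace StabIso

theorem of_equiv (e : M ≃ₗ[Λ] N) : StabIso Λ M N :=
  ⟨PUnit, PUnit, _, _, _, _, inferInstance, inferInstance, inferInstance, inferInstance,
    ⟨e.prodCongr (.refl Λ _)⟩⟩

theorem symm (h : StabIso Λ M N) : StabIso Λ N M :=
  have ⟨_, _, _, _, _, _, _, _, _, _, ⟨e⟩⟩ := h
  ⟨_, _, _, _, _, _, ‹_›, ‹_›, ‹_›, ‹_›, ⟨e.symm⟩⟩

theorem trans (h : StabIso Λ L M) (h' : StabIso Λ M N) : StabIso Λ L N := by
  obtain ⟨P, Q, _, _, _, _, _, _, _, _, ⟨e⟩⟩ := h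
  obtain ⟨P', Q', _, _, _, _, _, _, _, _, ⟨e'⟩⟩ := h'
  exact ⟨P × P', Q' × Q, _, _, _, _, inferInstance, inferInstance, inferInstance, inferInstance,
    ⟨(LinearEquiv.prodAssoc Λ L P P').symm ≪≫ₗ e.prodCongr (.refl Λ P') ≪≫ₗ
      LinearEquiv.prodAssoc Λ M Q P' ≪≫ₗ
      (LinearEquiv.refl Λ M).prodCongr (LinearEquiv.prodComm Λ Q P') ≪≫ₗ
      (LinearEquiv.prodAssoc Λ M P' Q).symm ≪≫ₗ e'.prodCongr (.refl Λ Q) ≪≫ₗ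
      LinearEquiv.prodAssoc Λ N Q' Q⟩⟩

theorem prod (h : StabIso Λ M N) (h' : StabIso Λ M' N') : StabIso Λ (M × M') (N × N') := by
  obtain ⟨P, Q, _, _, _, _, _, _, _, _, ⟨e⟩⟩ := h
  obtain ⟨P', Q', _, _, _, _, _, _, _, _, ⟨e'⟩⟩ := h'
  exact ⟨P × P', Q × Q', _, _, _, _, inferInstance, inferInstance, inferInstance, inferInstance,
    ⟨LinearEquiv.prodProdProdComm Λ M M' P P' ≪≫ₗ e.prodCongr e' ≪≫ₗ
      LinearEquiv.prodProdProdComm Λ N Q N' Q'⟩⟩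

theorem cancel_left [IsNoetherian Λ L] [IsArtinian Λ L] (h : StabIso Λ (L × M) (L × N)) :
    StabIso Λ M N := by
  obtain ⟨P, Q, _, _, _, _, _, _, _, _, ⟨e⟩⟩ := h
  exact ⟨P, Q, _, _, _, _, ‹_›, ‹_›, ‹_›, ‹_›, nonempty_equiv_of_prod_equiv_prod
    ((LinearEquiv.prodAssoc Λ L M P).symm ≪≫ₗ e ≪≫ₗ LinearEquiv.prodAssoc Λ L N Q)⟩

theorem of_isWeakSyzygy (hK : IsWeakSyzygy Λ K M) (hK' : IsWeakSyzygy Λ K' M')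
    (h : StabIso Λ M M') : StabIso Λ K K' := by
  obtain ⟨P, _, _, _, _, i, g, hig⟩ := hK
  obtain ⟨P', _, _, _, _, i', g', hig'⟩ := hK'
  obtain ⟨Q, Q', _, _, _, _, _, _, _, _, ⟨e⟩⟩ := h
  exact ⟨P' × Q', P × Q, _, _, _, _, inferInstance, inferInstance, inferInstance, inferInstance,
    ((hig.prod_middle_right Q).equiv_right e).schanuel (hig'.prod_middle_right Q')⟩

end StabIso

end StabIso

variable (Λ) in
/-- The setoid of stable isomorphism on finitely generated modules. -/
def stabSetoid : Setoid {M : ModuleCat.{u} Λ // Module.Finite Λ M} where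
  r M N := StabIso Λ M.1 N.1
  iseqv := ⟨fun M => .of_equiv (.refl Λ M.1), .symm, .trans⟩

variable (Λ) in
/-- Stable isomorphism classes of finitely generated modules; a monoid under direct sum. -/
def StabClass := Quotient (stabSetoid Λ)

namespace StabClass

/-- The stable isomorphism class of a finitely generated module. -/
def mk (M : Type u) [AddCommGroup M] [Module Λ M] [Module.Finite Λ M] : StabClass Λ :=
  Quotient.mk _ ⟨.of Λ M, inferInstance⟩

variable {K L M N : Type u} [AddCommGroup K] [Module Λ K] [AddCommGroup L] [Module Λ L]
  [AddCommGroup M] [Module Λ M] [AddCommGroup N] [Module Λ N]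

theorem mk_eq_mk [Module.Finite Λ M] [Module.Finite Λ N] :
    mk (Λ := Λ) M = mk N ↔ StabIso Λ M N :=
  Quotient.eq (r := stabSetoid Λ) (x := ⟨.of Λ M, inferInstance⟩) (y := ⟨.of Λ N, inferInstance⟩)

theorem mk_eq_mk_of_equiv [Module.Finite Λ M] [Module.Finite Λ N] (e : M ≃ₗ[Λ] N) :
    mk (Λ := Λ) M = mk N :=
  mk_eq_mk.mpr (.of_equiv e)

theorem ind {p : StabClass Λ → Prop}
    (h : ∀ (M : Type u) [AddCommGroup M] [Module Λ M] [Module.Finite Λ M], p (mk M))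
    (x : StabClass Λ) : p x :=
  Quotient.ind (fun ⟨M, hM⟩ => @h M _ _ hM) x

instance : Add (StabClass Λ) :=
  ⟨Quotient.map₂ (fun M N => ⟨.of Λ (M.1 × N.1), have := M.2; have := N.2; inferInstance⟩)
    fun _ _ h _ _ h' => StabIso.prod h h'⟩

theorem mk_prod [Module.Finite Λ M] [Module.Finite Λ N] :
    mk (Λ := Λ) (M × N) = mk M + mk N :=
  rfl

instance : Zero (StabClass Λ) := ⟨mk PUnit⟩

theorem mk_eq_zero [Subsingleton M] [Module.Finite Λ M] : mk (Λ := Λ) M = 0 :=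
  mk_eq_mk_of_equiv (0 : M ≃ₗ[Λ] PUnit.{u + 1})

instance : AddCommMonoid (StabClass Λ) where
  add_assoc a b c := by
    induction a using ind
    induction b using ind
    induction c using ind
    exact mk_eq_mk_of_equiv (LinearEquiv.prodAssoc Λ _ _ _)
  zero_add a := by
    induction a using ind
    exact mk_eq_mk_of_equiv LinearEquiv.uniqueProd
  add_zero a := by
    induction a using ind
    exact mk_eq_mk_of_equiv LinearEquiv.prodUnique
  add_comm a b := by
    induction a using ind
    induction b using ind
    exact mk_eq_mk_of_equiv (LinearEquiv.prodComm Λ _ _)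
  nsmul := nsmulRec

instance [IsArtinianRing Λ] : IsCancelAdd (StabClass Λ) := by
  have : IsLeftCancelAdd (StabClass Λ) := ⟨fun a b c h => by
    induction a using ind
    induction b using ind
    induction c using ind
    exact mk_eq_mk.mpr (mk_eq_mk.mp h).cancel_left⟩
  exact AddCommMagma.IsLeftCancelAdd.toIsCancelAdd _

variable [IsNoetherianRing Λ]

theorem exists_forall_isWeakSyzygy_mk_eq (x : StabClass Λ) :
    ∃ y : StabClass Λ, ∀ (K M : Type u) [AddCommGroup K] [Module Λ K] [Module.Finite Λ K]
      [AddCommGroup M] [Module Λ M] [Module.Finite Λ M],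
      IsWeakSyzygy Λ K M → mk M = x → y = mk K := by
  induction x using ind with | h N =>
  obtain ⟨N', _, _, hN'⟩ := IsWeakSyzygy.exists_of_finite (Λ := Λ) N
  have := hN'.finite
  exact ⟨mk N', fun K M _ _ _ _ _ _ h hMN =>
    mk_eq_mk.mpr (.of_isWeakSyzygy hN' h (mk_eq_mk.mp hMN).symm)⟩

variable (Λ) in
theorem exists_addMonoidHom_mk_eq : ∃ f : StabClass Λ →+ StabClass Λ,
    ∀ (K M : Type u) [AddCommGroup K] [Module Λ K] [Module.Finite Λ K] [AddCommGroup M]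
      [Module Λ M] [Module.Finite Λ M], IsWeakSyzygy Λ K M → f (mk M) = mk K := by
  choose f hf using exists_forall_isWeakSyzygy_mk_eq (Λ := Λ)
  refine ⟨⟨⟨f, ?_⟩, fun a b => ?_⟩, fun K M _ _ _ _ _ _ h => hf _ K M h rfl⟩
  · have hzero : IsWeakSyzygy Λ
        (LinearMap.ker (LinearMap.id : PUnit.{u + 1} →ₗ[Λ] PUnit.{u + 1})) PUnit :=
      .of_surjective Function.surjective_id
    exact (hf 0 _ PUnit hzero mk_eq_zero).trans mk_eq_zero
  · induction a using ind with | h M =>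
    induction b using ind with | h N =>
    obtain ⟨K, _, _, hK⟩ := IsWeakSyzygy.exists_of_finite (Λ := Λ) M
    obtain ⟨L, _, _, hL⟩ := IsWeakSyzygy.exists_of_finite (Λ := Λ) N
    have := hK.finite
    have := hL.finite
    change f (mk M + mk N) = f (mk M) + f (mk N)
    rw [hf _ K M hK rfl, hf _ L N hL rfl, ← mk_prod, ← mk_prod, hf _ _ _ (hK.prod hL) rfl]

variable (Λ) in
/-- The syzygy operator on stable isomorphism classes. -/
noncomputable def syz : StabClass Λ →+ StabClass Λ :=
  (exists_addMonoidHom_mk_eq Λ).choose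

theorem syz_mk [Module.Finite Λ K] [Module.Finite Λ M] (h : IsWeakSyzygy Λ K M) :
    syz Λ (mk M) = mk K :=
  (exists_addMonoidHom_mk_eq Λ).choose_spec K M h

theorem iterate_syz_mk {n : ℕ} [Module.Finite Λ K] [Module.Finite Λ M]
    (h : IsWeakNthSyzygy Λ n K M) : (syz Λ)^[n] (mk M) = mk K := by
  induction n generalizing K with
  | zero => exact have ⟨e⟩ := h; mk_eq_mk_of_equiv e.symm
  | succ n ih =>
    obtain ⟨K', _, _, hK', hK⟩ := h
    have := hK'.finite
    rw [Function.iterate_succ_apply', ih hK', syz_mk hK]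

end StabClass

end StableClasses

section ProjectiveDimension

variable {Λ : Type u} [Ring Λ]

variable (Λ) in
/-- The projective dimension of `M` is less than `n`, expressed through Mathlib's vanishing of
`Ext`. -/
abbrev ProjDimLT (M : Type u) [AddCommGroup M] [Module Λ M] (n : ℕ) : Prop :=
  CategoryTheory.HasProjectiveDimensionLT (ModuleCat.of Λ M) n

variable {K L M N : Type u} [AddCommGroup K] [Module Λ K] [AddCommGroup L] [Module Λ L]
  [AddCommGroup M] [Module Λ M] [AddCommGroup N] [Module Λ N] {n : ℕ}

theorem IsSES.shortExact {i : K →ₗ[Λ] L} {g : L →ₗ[Λ] M} (h : IsSES i g) :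
    (CategoryTheory.ShortComplex.mk (ModuleCat.ofHom i) (ModuleCat.ofHom g)
      (ModuleCat.hom_ext (LinearMap.ext h.comp_apply))).ShortExact :=
  ModuleCat.shortComplex_shortExact _ h.exact h.injective h.surjective

namespace ProjDimLT

theorem mono {m : ℕ} (_ : ProjDimLT Λ M m) (hmn : m ≤ n) : ProjDimLT Λ M n :=
  CategoryTheory.hasProjectiveDimensionLT_of_ge _ m n hmn

theorem of_equiv (_ : ProjDimLT Λ M n) (e : M ≃ₗ[Λ] N) : ProjDimLT Λ N n :=
  CategoryTheory.hasProjectiveDimensionLT_of_iso e.toModuleIso n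

theorem of_isSummand (_ : ProjDimLT Λ N n) (hMN : IsSummand Λ M N) : ProjDimLT Λ M n :=
  have ⟨i, p, hpi⟩ := hMN
  CategoryTheory.Retract.hasProjectiveDimensionLT
    ⟨ModuleCat.ofHom i, ModuleCat.ofHom p, ModuleCat.hom_ext hpi⟩ n

theorem one_iff : ProjDimLT Λ M 1 ↔ Module.Projective Λ M :=
  CategoryTheory.projective_iff_hasProjectiveDimensionLT_one.symm.trans
    (IsProjective.iff_projective (R := Λ) M).symm

theorem of_projective [Module.Projective Λ M] (hn : 1 ≤ n) : ProjDimLT Λ M n :=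
  (one_iff.mpr inferInstance).mono hn

section ShortExact

variable {i : K →ₗ[Λ] L} {g : L →ₗ[Λ] M}

theorem left_of_isSES (h : IsSES i g) (hL : ProjDimLT Λ L n) (hM : ProjDimLT Λ M (n + 1)) :
    ProjDimLT Λ K n :=
  h.shortExact.hasProjectiveDimensionLT_X₁ n hL hM

theorem middle_of_isSES (h : IsSES i g) (hK : ProjDimLT Λ K n) (hM : ProjDimLT Λ M n) :
    ProjDimLT Λ L n :=
  h.shortExact.hasProjectiveDimensionLT_X₂ n hK hM

theorem right_of_isSES (h : IsSES i g) (hK : ProjDimLT Λ K n) (hL : ProjDimLT Λ L (n + 1)) :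
    ProjDimLT Λ M (n + 1) :=
  h.shortExact.hasProjectiveDimensionLT_X₃ n hK hL

end ShortExact

theorem prod (hM : ProjDimLT Λ M n) (hN : ProjDimLT Λ N n) : ProjDimLT Λ (M × N) n :=
  middle_of_isSES ⟨LinearMap.inl_injective, LinearMap.snd_surjective, .inl_snd⟩ hM hN

end ProjDimLT

theorem IsWeakSyzygy.projDimLT_iff (h : IsWeakSyzygy Λ K M) :
    ProjDimLT Λ M (n + 2) ↔ ProjDimLT Λ K (n + 1) :=
  have ⟨_, _, _, _, _, _, _, hjq⟩ := h
  ⟨.left_of_isSES hjq (.of_projective n.succ_pos),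
    fun hK => .right_of_isSES hjq hK (.of_projective (n + 1).succ_pos)⟩

theorem IsWeakNthSyzygy.projDimLT_iff {m : ℕ} (h : IsWeakNthSyzygy Λ m K M) :
    ProjDimLT Λ M (n + m + 1) ↔ ProjDimLT Λ K (n + 1) := by
  induction m generalizing K n with
  | zero => exact have ⟨e⟩ := h; ⟨(·.of_equiv e.symm), (·.of_equiv e)⟩
  | succ m ih =>
    obtain ⟨K', _, _, hK', hK⟩ := h
    rw [← hK.projDimLT_iff, ← ih hK', show n + (m + 1) + 1 = n + 1 + m + 1 by lia]

theorem projDimLE_iff_projDimLT [IsNoetherianRing Λ] {M : ModuleCat.{u} Λ} [Module.Finite Λ M] :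
    ProjDimLE Λ n M ↔ ProjDimLT Λ M (n + 1) := by
  induction n generalizing M with
  | zero => exact ProjDimLT.one_iff.symm
  | succ n ih =>
    constructor
    · rintro ⟨P, g, _, _, hg, h⟩
      exact (IsWeakSyzygy.of_surjective hg).projDimLT_iff.mpr (ih.mp h)
    · intro h
      obtain ⟨k, g, hg⟩ := Module.Finite.exists_fin' Λ M
      exact ⟨.of Λ (Fin k → Λ), g, inferInstance, inferInstance, hg,
        ih.mpr ((IsWeakSyzygy.of_surjective hg).projDimLT_iff.mp h)⟩

section Fitting

variable {X P Z : Type u} [AddCommGroup X] [Module Λ X] [AddCommGroup P] [Module Λ P]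
  [AddCommGroup Z] [Module Λ Z] {f : X →ₗ[Λ] X} {g : X →ₗ[Λ] P} {c : X × P →ₗ[Λ] Z}

open CategoryTheory Abelian

theorem IsSES.exists_mk₀_comp_eq_of_projDimLT [Module.Projective Λ P] (h : IsSES (f.prod g) c)
    (hn : 1 ≤ n) (hZ : ProjDimLT Λ Z n) {j : ℕ} (hj : n ≤ j) {T : ModuleCat.{u} Λ}
    (x : Ext (ModuleCat.of Λ X) T j) : ∃ y : Ext (ModuleCat.of Λ X) T j,
      (Ext.mk₀ (ModuleCat.ofHom f)).comp y (zero_add j) = x := by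
  obtain ⟨y, hy⟩ := Ext.contravariant_sequence_exact₁ h.shortExact T x (add_comm 1 j)
    (Ext.eq_zero_of_hasProjectiveDimensionLT (X := ModuleCat.of Λ Z) _ n (by lia))
  change Ext (ModuleCat.of Λ (X × P)) T j at y
  have hP : (Ext.mk₀ (ModuleCat.ofHom (LinearMap.inr Λ X P))).comp y (zero_add j) = 0 := by
    have : ProjDimLT Λ P 1 := .of_projective le_rfl
    exact Ext.eq_zero_of_hasProjectiveDimensionLT _ 1 (by lia)
  have hfg : ModuleCat.ofHom (f.prod g) =
      ModuleCat.ofHom f ≫ ModuleCat.ofHom (LinearMap.inl Λ X P) +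
        ModuleCat.ofHom g ≫ ModuleCat.ofHom (LinearMap.inr Λ X P) := by
    ext x <;> simp
  replace hy : (Ext.mk₀ (ModuleCat.ofHom (f.prod g))).comp y (zero_add j) = x := hy
  refine ⟨(Ext.mk₀ (ModuleCat.ofHom (LinearMap.inl Λ X P))).comp y (zero_add j), ?_⟩
  rw [← hy, hfg, Ext.mk₀_add, Ext.add_comp, ← Ext.mk₀_comp_mk₀_assoc, ← Ext.mk₀_comp_mk₀_assoc, hP,
    Ext.comp_zero, add_zero]

theorem IsSES.projDimLT_of_isNilpotent [Module.Projective Λ P] (h : IsSES (f.prod g) c)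
    (hf : IsNilpotent f) (hn : 1 ≤ n) (hZ : ProjDimLT Λ Z n) : ProjDimLT Λ X n := by
  obtain ⟨m, hm⟩ := hf
  refine (hasProjectiveDimensionLT_iff.{u} _ _).mpr fun j hj T x => ?_
  have hpow (k : ℕ) : ∃ y : Ext (ModuleCat.of Λ X) T j,
      (Ext.mk₀ (ModuleCat.ofHom (f ^ k))).comp y (zero_add j) = x := by
    induction k with
    | zero => exact ⟨x, x.mk₀_id_comp⟩
    | succ k ih =>
      obtain ⟨y, rfl⟩ := ih
      obtain ⟨z, rfl⟩ := h.exists_mk₀_comp_eq_of_projDimLT hn hZ hj y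
      exact ⟨z, by rw [Ext.mk₀_comp_mk₀_assoc, pow_succ']; rfl⟩
  obtain ⟨y, rfl⟩ := hpow m
  rw [hm, ModuleCat.ofHom_zero, Ext.mk₀_zero, Ext.zero_comp]

theorem IsSES.restrict_fitting (h : IsSES (f.prod g) c) {U V : Submodule Λ X}
    (hUV : Codisjoint U V) (hU : ∀ x, f x ∈ U ↔ x ∈ U) (hV : V ≤ LinearMap.range f) :
    IsSES ((f.restrict fun x => (hU x).mpr).prod (g ∘ₗ U.subtype))
      (c ∘ₗ U.subtype.prodMap LinearMap.id) := by
  refine .of_forall (fun x y hxy => ?_) (fun z => ?_) (fun x => h.comp_apply x) ?_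
  · apply Subtype.ext
    apply h.injective
    exact Prod.ext (congrArg (fun w => (w.1 : X)) hxy) (congrArg (fun w => w.2) hxy)
  · obtain ⟨⟨x, p⟩, rfl⟩ := h.surjective z
    obtain ⟨u, _, hu, hv, rfl⟩ := Submodule.codisjoint_iff_exists_add_eq.mp hUV x
    obtain ⟨y, rfl⟩ := hV hv
    refine ⟨(⟨u, hu⟩, p - g y), ?_⟩
    have hsplit : (u + f y, p) = (u, p - g y) + f.prod g y := by
      simp only [LinearMap.prod_apply, Function.prod_apply, Prod.mk_add_mk, sub_add_cancel]
    rw [hsplit, map_add, h.comp_apply, add_zero]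
    rfl
  · rintro ⟨x, p⟩ hx
    obtain ⟨y, hy⟩ := h.exists_of_eq_zero hx
    have hyx : f y = x := congrArg Prod.fst hy
    exact ⟨⟨y, (hU y).mp (hyx ▸ x.2)⟩, Prod.ext (Subtype.ext hyx) (congrArg Prod.snd hy :)⟩

theorem IsSES.exists_isSummand_isNilpotent [IsNoetherian Λ X] [IsArtinian Λ X]
    (h : IsSES (f.prod g) c) : ∃ (U : Submodule Λ X) (f' : U →ₗ[Λ] U) (c' : U × P →ₗ[Λ] Z),
      IsSummand Λ U X ∧ IsNilpotent f' ∧ IsSES (f'.prod (g ∘ₗ U.subtype)) c' := by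
  obtain ⟨n, hcompl, hker, hn⟩ := (f.eventually_isCompl_ker_pow_range_pow.and
    (f.eventually_iSup_ker_pow_eq.and (Filter.eventually_ge_atTop 1))).exists
  have hmem (x : X) : f x ∈ LinearMap.ker (f ^ n) ↔ x ∈ LinearMap.ker (f ^ n) := by
    rw [LinearMap.mem_ker, LinearMap.mem_ker, ← Module.End.mul_apply, ← pow_succ]
    refine ⟨fun hx => hker.le (Submodule.mem_iSup_of_mem (n + 1) hx), fun hx => ?_⟩
    rw [pow_succ', Module.End.mul_apply, hx, map_zero]
  have hrange : LinearMap.range (f ^ n) ≤ LinearMap.range f := by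
    obtain ⟨k, rfl⟩ := Nat.exists_eq_add_of_le' hn
    rw [pow_succ']
    exact LinearMap.range_comp_le_range _ _
  refine ⟨_, _, _, .of_isCompl hcompl, ⟨n, ?_⟩, h.restrict_fitting hcompl.codisjoint hmem hrange⟩
  rw [Module.End.pow_restrict]
  exact LinearMap.ext fun x => Subtype.ext x.2

end Fitting

end ProjectiveDimension

section Iterates

theorem exists_forall_pow_apply_eq_zero {Λ G : Type*} [Ring Λ] [AddCommGroup G] [Module Λ G]
    (W : Module.End Λ G) (H : Submodule Λ G) [IsNoetherian Λ H] :
    ∃ n, ∀ d ∈ H, ∀ N, (W ^ N) d = 0 → (W ^ n) d = 0 := by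
  let kernels : ℕ →o Submodule Λ H :=
    ⟨fun n => (LinearMap.ker (W ^ n)).comap H.subtype,
      fun _ _ h => Submodule.comap_mono (W.iterateKer.monotone h)⟩
  obtain ⟨n, hn⟩ := monotone_stabilizes_iff_noetherian.mpr ‹_› kernels
  refine ⟨n, fun d hd N hN => ?_⟩
  have hmem : (⟨d, hd⟩ : H) ∈ kernels (max n N) := kernels.monotone (le_max_right n N) hN
  rwa [← hn _ (le_max_left n N)] at hmem

theorem exists_forall_iterate_eq_of_mem_closure {M : Type*} [AddCommMonoid M] [IsCancelAdd M]
    (ω : M →+ M) {S : Set M} (hS : S.Finite) :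
    ∃ n, ∀ x ∈ AddSubmonoid.closure S, ∀ y ∈ AddSubmonoid.closure S, ∀ N,
      ω^[N] x = ω^[N] y → ω^[n] x = ω^[n] y := by
  let G := Algebra.GrothendieckAddGroup M
  let ι : M →+ G := Algebra.GrothendieckAddGroup.of
  have hι : Function.Injective ι := Algebra.GrothendieckAddGroup.of_injective
  let W : Module.End ℤ G := (Algebra.GrothendieckAddGroup.lift (ι.comp ω)).toIntLinearMap
  have hW : Function.Semiconj ι ω W := fun x =>
    (DFunLike.congr_fun (Algebra.GrothendieckAddGroup.lift.symm_apply_apply (ι.comp ω)) x).symm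
  have hker (k : ℕ) (x y : M) : (W ^ k) (ι x - ι y) = 0 ↔ ω^[k] x = ω^[k] y := by
    rw [map_sub, sub_eq_zero, Module.End.pow_apply, Module.End.pow_apply,
      ← hW.iterate_right k, ← hW.iterate_right k, hι.eq_iff]
  have hclosure : AddSubmonoid.closure S ≤
      (Submodule.span ℤ (ι '' S)).toAddSubmonoid.comap ι :=
    AddSubmonoid.closure_le.mpr fun x hx => Submodule.subset_span ⟨x, hx, rfl⟩
  have := isNoetherian_span_of_finite ℤ (hS.image ι)
  obtain ⟨n, hn⟩ := exists_forall_pow_apply_eq_zero W (Submodule.span ℤ (ι '' S))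
  exact ⟨n, fun x hx y hy N hN => (hker n x y).mp <|
    hn _ (sub_mem (hclosure hx) (hclosure hy)) N ((hker N x y).mpr hN)⟩

end Iterates

section AddClosure

variable {Λ : Type u} [Ring Λ]

section Basic

variable {N N' X Y Z W : Type*} [AddCommGroup N] [Module Λ N] [AddCommGroup N'] [Module Λ N']
  [AddCommGroup X] [Module Λ X] [AddCommGroup Y] [Module Λ Y] [AddCommGroup Z] [Module Λ Z]
  [AddCommGroup W] [Module Λ W]

namespace IsSummand

theorem fst : IsSummand Λ X (X × Y) :=
  ⟨LinearMap.inl Λ X Y, LinearMap.fst Λ X Y, rfl⟩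

theorem snd : IsSummand Λ Y (X × Y) :=
  ⟨LinearMap.inr Λ X Y, LinearMap.snd Λ X Y, rfl⟩

theorem prodMap (h : IsSummand Λ X Y) (h' : IsSummand Λ Z W) : IsSummand Λ (X × Z) (Y × W) := by
  obtain ⟨i, p, hpi⟩ := h
  obtain ⟨j, q, hqj⟩ := h'
  exact ⟨i.prodMap j, p.prodMap q, LinearMap.ext fun x =>
    Prod.ext (LinearMap.congr_fun hpi x.1) (LinearMap.congr_fun hqj x.2)⟩

theorem pi (h : IsSummand Λ X Y) (k : ℕ) : IsSummand Λ (Fin k → X) (Fin k → Y) := by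
  obtain ⟨i, p, hpi⟩ := h
  exact ⟨i.compLeft (Fin k), p.compLeft (Fin k), LinearMap.ext fun x =>
    funext fun t => LinearMap.congr_fun hpi (x t)⟩

theorem finite (h : IsSummand Λ X Y) [Module.Finite Λ Y] : Module.Finite Λ X :=
  have ⟨p, hp⟩ := h.surjective
  .of_surjective p hp

end IsSummand

namespace MemAdd

theorem of_isSummand (hX : IsSummand Λ X Y) (hY : MemAdd Λ N Y) : MemAdd Λ N X :=
  have ⟨k, hk⟩ := hY
  ⟨k, hX.trans hk⟩

variable (N) in
theorem refl : MemAdd Λ N N :=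
  ⟨1, .of_equiv (LinearEquiv.funUnique (Fin 1) Λ N).symm⟩

theorem trans (hX : MemAdd Λ N X) (hY : MemAdd Λ X Y) : MemAdd Λ N Y :=
  have ⟨k, hk⟩ := hX
  have ⟨l, hl⟩ := hY
  ⟨l * k, hl.trans <| (hk.pi l).trans <| .of_equiv <|
    (LinearEquiv.curry Λ N (Fin l) (Fin k)).symm ≪≫ₗ
      LinearEquiv.funCongrLeft Λ N finProdFinEquiv.symm⟩

theorem prod (hX : MemAdd Λ N X) (hY : MemAdd Λ N Y) : MemAdd Λ N (X × Y) :=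
  have ⟨k, hk⟩ := hX
  have ⟨l, hl⟩ := hY
  ⟨k + l, (hk.prodMap hl).trans <| .of_equiv <|
    (LinearEquiv.sumArrowLequivProdArrow (Fin k) (Fin l) Λ N).symm ≪≫ₗ
      LinearEquiv.funCongrLeft Λ N finSumFinEquiv.symm⟩

theorem inl (h : MemAdd Λ N X) : MemAdd Λ (N × N') X :=
  .trans (.of_isSummand .fst (.refl _)) h

theorem inr (h : MemAdd Λ N' X) : MemAdd Λ (N × N') X :=
  .trans (.of_isSummand .snd (.refl _)) h

theorem finite (h : MemAdd Λ N X) [Module.Finite Λ N] : Module.Finite Λ X :=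
  have ⟨_, hk⟩ := h
  hk.finite

theorem of_projective [Module.Projective Λ X] [Module.Finite Λ X] : MemAdd Λ Λ X :=
  have ⟨k, f, hf⟩ := Module.Finite.exists_fin' Λ X
  have ⟨i, hi⟩ := Module.projective_lifting_property f LinearMap.id hf
  ⟨k, i, f, hi⟩

end MemAdd

end Basic

section Syzygies

variable {K M : Type u} [AddCommGroup K] [Module Λ K] [AddCommGroup M] [Module Λ M]

theorem IsWeakSyzygy.pi (h : IsWeakSyzygy Λ K M) (k : ℕ) :
    IsWeakSyzygy Λ (Fin k → K) (Fin k → M) := by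
  obtain ⟨P, _, _, _, _, j, q, hjq⟩ := h
  refine ⟨Fin k → P, _, _, .of_equiv (DFinsupp.linearEquivFunOnFintype (M := fun _ : Fin k => P)),
    inferInstance, j.compLeft (Fin k), q.compLeft (Fin k), .of_forall hjq.injective.comp_left
      hjq.surjective.comp_left (fun x => funext fun t => hjq.comp_apply (x t)) fun y hy => ?_⟩
  choose x hx using fun t => hjq.exists_of_eq_zero (congrFun hy t)
  exact ⟨x, funext hx⟩

theorem IsWeakSyzygy.exists_forall_memAdd [IsNoetherianRing Λ] (N : Type u) [AddCommGroup N]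
    [Module Λ N] [Module.Finite Λ N] :
    ∃ (N₁ : Type u) (_ : AddCommGroup N₁) (_ : Module Λ N₁), Module.Finite Λ N₁ ∧
      ∀ (X K : Type u) [AddCommGroup X] [Module Λ X] [AddCommGroup K] [Module Λ K],
        MemAdd Λ N X → IsWeakSyzygy Λ K X → MemAdd Λ N₁ K := by
  obtain ⟨N', _, _, hN'⟩ := IsWeakSyzygy.exists_of_finite (Λ := Λ) N
  have := hN'.finite
  refine ⟨N' × Λ, _, _, inferInstance, fun X K _ _ _ _ ⟨k, i, p, hpi⟩ hK => ?_⟩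
  obtain ⟨e, -⟩ := exists_equiv_prod_ker_of_comp_eq_id hpi
  obtain ⟨C, _, _, hC⟩ := IsWeakSyzygy.exists_of_finite (Λ := Λ) (LinearMap.ker p)
  obtain ⟨P, Q, _, _, _, _, _, _, _, _, ⟨f⟩⟩ :=
    StabIso.of_isWeakSyzygy (hC.prod hK) (hN'.pi k) (.of_equiv e.symm)
  exact .of_isSummand (.trans .snd (.trans .fst (.of_equiv f)))
    (.prod (.inl ⟨k, .of_equiv (.refl Λ _)⟩) (.inr .of_projective))

theorem IsWeakNthSyzygy.exists_forall_memAdd [IsNoetherianRing Λ] (n : ℕ) (N : Type u)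
    [AddCommGroup N] [Module Λ N] [Module.Finite Λ N] :
    ∃ (N₁ : Type u) (_ : AddCommGroup N₁) (_ : Module Λ N₁), Module.Finite Λ N₁ ∧
      ∀ (X K : Type u) [AddCommGroup X] [Module Λ X] [AddCommGroup K] [Module Λ K],
        MemAdd Λ N X → IsWeakNthSyzygy Λ n K X → MemAdd Λ N₁ K := by
  induction n with
  | zero => exact ⟨N, _, _, ‹_›, fun X K _ _ _ _ hX ⟨e⟩ => .of_isSummand (.of_equiv e) hX⟩
  | succ n ih =>
    obtain ⟨N', _, _, _, hN'⟩ := ih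
    obtain ⟨N₁, _, _, hfin, hN₁⟩ := IsWeakSyzygy.exists_forall_memAdd (Λ := Λ) N'
    exact ⟨N₁, _, _, hfin, fun X K _ _ _ _ hX ⟨K', _, _, hK', hK⟩ =>
      hN₁ K' K (hN' X K' hX hK') hK⟩

end Syzygies

theorem exists_forall_mem_projDimLT (l : List (ModuleCat.{u} Λ)) :
    ∃ n, ∀ Y ∈ l, (∃ k, ProjDimLT Λ Y k) → ProjDimLT Λ Y n := by
  choose! k hk using fun Y : ModuleCat.{u} Λ => fun hY : ∃ k, ProjDimLT Λ Y k => hY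
  exact ⟨(l.map k).foldr max 0, fun Y hY hfin =>
    (hk Y hfin).mono (List.le_max_of_le (List.mem_map_of_mem hY) le_rfl)⟩

variable [IsArtinianRing Λ]

theorem MemAdd.exists_forall_projDimLT (W : Type u) [AddCommGroup W] [Module Λ W]
    [Module.Finite Λ W] : ∃ n, ∀ (X : Type u) [AddCommGroup X] [Module Λ X],
      MemAdd Λ W X → (∃ k, ProjDimLT Λ X k) → ProjDimLT Λ X n := by
  obtain ⟨l, -, hl⟩ := exists_list_isAdditiveClass_of_memAdd (Λ := Λ) W
  obtain ⟨n, hn⟩ := exists_forall_mem_projDimLT l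
  refine ⟨n, hl (fun X => (∃ k, ProjDimLT Λ X k) → ProjDimLT Λ X n) ?_ hn⟩
  exact {
    of_equiv e hX := fun ⟨k, hk⟩ => (hX ⟨k, hk.of_equiv e.symm⟩).of_equiv e
    of_subsingleton _ _ := ProjDimLT.mono (m := 0)
      (ModuleCat.isZero_of_subsingleton _).hasProjectiveDimensionLT_zero n.zero_le
    prod hX hY := fun ⟨k, hk⟩ =>
      (hX ⟨k, hk.of_isSummand .fst⟩).prod (hY ⟨k, hk.of_isSummand .snd⟩) }

theorem StabClass.exists_finite_mem_closure_of_memAdd (V : Type u) [AddCommGroup V] [Module Λ V]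
    [Module.Finite Λ V] : ∃ S : Set (StabClass Λ), S.Finite ∧
      ∀ (X : Type u) [AddCommGroup X] [Module Λ X] [Module.Finite Λ X],
        MemAdd Λ V X → StabClass.mk X ∈ AddSubmonoid.closure S := by
  obtain ⟨l, hlV, hl⟩ := exists_list_isAdditiveClass_of_memAdd (Λ := Λ) V
  have hfinite (Y : {Y // Y ∈ l}) : Module.Finite Λ Y.1 := (hlV Y Y.2).finite
  refine ⟨Set.range fun Y : {Y // Y ∈ l} => StabClass.mk (Λ := Λ) Y.1,
    have : Finite {Y // Y ∈ l} := (List.finite_toSet l).to_subtype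
    Set.finite_range _, fun X _ _ hX hXV => ?_⟩
  refine hl (fun X => ∀ [Module.Finite Λ X], StabClass.mk (Λ := Λ) X ∈ AddSubmonoid.closure _)
    ?_ (fun Y hY _ => AddSubmonoid.subset_closure (Set.mem_range.mpr ⟨⟨Y, hY⟩, rfl⟩)) X hXV
  exact {
    of_equiv e hX _ := by
      have := Module.Finite.equiv e.symm
      simpa only [mk_eq_mk_of_equiv e] using hX
    of_subsingleton _ _ := by simp only [mk_eq_zero, zero_mem]
    prod {X Y} _ _ _ _ hX hY _ := by
      have : Module.Finite Λ X := IsSummand.finite (Y := X × Y) .fst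
      have : Module.Finite Λ Y := IsSummand.finite (Y := X × Y) .snd
      simpa only [mk_prod] using add_mem hX hY }

end AddClosure

section IgusaTodorov

variable {Λ : Type u} [Ring Λ] [IsArtinianRing Λ]
variable {K L Y : Type u} [AddCommGroup K] [Module Λ K] [AddCommGroup L] [Module Λ L]
  [AddCommGroup Y] [Module Λ Y] {i : K →ₗ[Λ] L} {g : L →ₗ[Λ] Y} {n : ℕ}

theorem IsSES.iterate_syz_mk_eq_of_projDimLT [Module.Finite Λ K] [Module.Finite Λ L]
    (h : IsSES i g) (hY : ProjDimLT Λ Y (n + 1)) :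
    (StabClass.syz Λ)^[n] (.mk K) = (StabClass.syz Λ)^[n] (.mk L) := by
  have : Module.Finite Λ Y := .of_surjective g h.surjective
  obtain ⟨K', _, _, hK'⟩ := IsWeakNthSyzygy.exists_of_finite (Λ := Λ) n K
  obtain ⟨Y', _, _, hY'⟩ := IsWeakNthSyzygy.exists_of_finite (Λ := Λ) n Y
  obtain ⟨L', _, _, i', g', hL', h'⟩ := IsWeakNthSyzygy.horseshoe h hK' hY'
  have := hK'.finite
  have := hL'.finite
  have := hY'.finite
  have : Module.Projective Λ Y' :=
    ProjDimLT.one_iff.mp (hY'.projDimLT_iff (n := 0).mp (by rwa [zero_add]))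
  obtain ⟨e⟩ := h'.nonempty_equiv_prod
  rw [StabClass.iterate_syz_mk hK', StabClass.iterate_syz_mk hL', StabClass.mk_eq_mk]
  exact ⟨Y', PUnit.{u + 1}, _, _, _, _, ‹_›, ‹_›, inferInstance, inferInstance,
    ⟨e.symm ≪≫ₗ LinearEquiv.prodUnique.symm⟩⟩

theorem IsSES.projDimLT_of_stabIso [Module.Finite Λ K] {b : ℕ} (h : IsSES i g)
    (hKL : StabIso Λ K L) (hb : ∀ (U : Type u) [AddCommGroup U] [Module Λ U],
      MemAdd Λ (K × Λ) U → (∃ k, ProjDimLT Λ U k) → ProjDimLT Λ U b)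
    (hY : ProjDimLT Λ Y (n + 1)) : ProjDimLT Λ Y (b + 1) := by
  obtain ⟨P, Q, _, _, _, _, _, _, _, _, ⟨e⟩⟩ := hKL
  obtain ⟨a, c, hac⟩ : ∃ (a : K × P →ₗ[Λ] (K × P) × P) (c : (K × P) × P →ₗ[Λ] Y × Q), IsSES a c :=
    ⟨_, _, ((h.prod_middle_right Q).prod_left_middle P).equiv_middle
      (e.symm.prodCongr (LinearEquiv.refl Λ P))⟩
  have hac' : IsSES ((LinearMap.fst Λ _ _ ∘ₗ a).prod (LinearMap.snd Λ _ _ ∘ₗ a)) c := hac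
  obtain ⟨U, f, c', hU, hf, hUf⟩ := hac'.exists_isSummand_isNilpotent
  have hUadd : MemAdd Λ (K × Λ) U :=
    .of_isSummand hU (.prod (.inl (.refl K)) (.inr .of_projective))
  have hYQ : ProjDimLT Λ (Y × Q) (n + 1) := hY.prod (.of_projective n.succ_pos)
  have hUb : ProjDimLT Λ U b :=
    hb U hUadd ⟨n + 1, hUf.projDimLT_of_isNilpotent hf n.succ_pos hYQ⟩
  exact (ProjDimLT.right_of_isSES hUf hUb ((hUb.mono b.le_succ).prod
    (.of_projective b.succ_pos))).of_isSummand .fst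

theorem exists_forall_projDimLT_of_memAdd_of_memAdd (V : Type u) [AddCommGroup V] [Module Λ V]
    [Module.Finite Λ V] : ∃ n, ∀ (K L Y : Type u) [AddCommGroup K] [Module Λ K] [AddCommGroup L]
      [Module Λ L] [AddCommGroup Y] [Module Λ Y] (i : K →ₗ[Λ] L) (g : L →ₗ[Λ] Y), IsSES i g →
      MemAdd Λ V K → MemAdd Λ V L → (∃ k, ProjDimLT Λ Y k) → ProjDimLT Λ Y n := by
  obtain ⟨S, hS, hSV⟩ := StabClass.exists_finite_mem_closure_of_memAdd (Λ := Λ) V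
  obtain ⟨n, hn⟩ := exists_forall_iterate_eq_of_mem_closure (StabClass.syz Λ) hS
  obtain ⟨V₁, _, _, _, hV₁⟩ := IsWeakNthSyzygy.exists_forall_memAdd (Λ := Λ) n V
  obtain ⟨b, hb⟩ := MemAdd.exists_forall_projDimLT (Λ := Λ) (V₁ × Λ)
  refine ⟨b + n + 1, fun K L Y _ _ _ _ _ _ i g h hK hL ⟨N, hN⟩ => ?_⟩
  have := hK.finite
  have := hL.finite
  have : Module.Finite Λ Y := .of_surjective g h.surjective
  have hKL : (StabClass.syz Λ)^[n] (.mk K) = (StabClass.syz Λ)^[n] (.mk L) :=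
    hn _ (hSV K hK) _ (hSV L hL) N (h.iterate_syz_mk_eq_of_projDimLT (hN.mono N.le_succ))
  obtain ⟨K', _, _, hK'⟩ := IsWeakNthSyzygy.exists_of_finite (Λ := Λ) n K
  obtain ⟨Y', _, _, hY'⟩ := IsWeakNthSyzygy.exists_of_finite (Λ := Λ) n Y
  obtain ⟨L', _, _, i', g', hL', h'⟩ := IsWeakNthSyzygy.horseshoe h hK' hY'
  have := hK'.finite
  have := hL'.finite
  rw [StabClass.iterate_syz_mk hK', StabClass.iterate_syz_mk hL', StabClass.mk_eq_mk] at hKL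
  have hK'add : MemAdd Λ (V₁ × Λ) (K' × Λ) := .prod (.inl (hV₁ K K' hK hK')) (.inr (.refl Λ))
  have hY'N : ProjDimLT Λ Y' (N + 1) := hY'.projDimLT_iff.mp (hN.mono (by lia))
  exact hY'.projDimLT_iff.mpr
    (h'.projDimLT_of_stabIso hKL (fun U _ _ hU => hb U (hK'add.trans hU)) hY'N)

theorem exists_forall_projDimLT_middle_of_memAdd (m : ℕ) (N M : Type u) [AddCommGroup N]
    [Module Λ N] [Module.Finite Λ N] [AddCommGroup M] [Module Λ M] [Module.Finite Λ M] :
    ∃ n, ∀ (D Y Z Z' : Type u) [AddCommGroup D] [Module Λ D] [AddCommGroup Y] [Module Λ Y]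
      [AddCommGroup Z] [Module Λ Z] [AddCommGroup Z'] [Module Λ Z'] (i : D →ₗ[Λ] Y)
      (g : Y →ₗ[Λ] Z), IsSES i g → MemAdd Λ N D → IsWeakNthSyzygy Λ m Z' Z → MemAdd Λ M Z' →
      (∃ k, ProjDimLT Λ Y k) → ProjDimLT Λ Y n := by
  obtain ⟨N₁, _, _, _, hN₁⟩ := IsWeakNthSyzygy.exists_forall_memAdd (Λ := Λ) m N
  obtain ⟨M₁, _, _, _, hM₁⟩ := IsWeakSyzygy.exists_forall_memAdd (Λ := Λ) M
  obtain ⟨n, hn⟩ := exists_forall_projDimLT_of_memAdd_of_memAdd (Λ := Λ) (M₁ × N₁ × Λ)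
  refine ⟨n + m + 1, fun D Y Z Z' _ _ _ _ _ _ _ _ i g h hD hZ' hZ'M ⟨k, hk⟩ => ?_⟩
  have := hD.finite
  have := hZ'M.finite
  obtain ⟨D', _, _, hD'⟩ := IsWeakNthSyzygy.exists_of_finite (Λ := Λ) m D
  obtain ⟨Y', _, _, i', g', hY', h'⟩ := IsWeakNthSyzygy.horseshoe h hD' hZ'
  obtain ⟨W, _, _, hW⟩ := IsWeakSyzygy.exists_of_finite (Λ := Λ) Z'
  have hWadd := hM₁ Z' W hZ'M hW
  obtain ⟨P, _, _, _, _, j, q, hjq⟩ := hW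
  obtain ⟨a, b, hab⟩ := h'.rotate hjq
  have hD'P : MemAdd Λ (M₁ × N₁ × Λ) (D' × P) :=
    .inr (.prod (.inl (hN₁ D D' hD hD')) (.inr .of_projective))
  have hY'n : ProjDimLT Λ Y' n := hn W (D' × P) Y' a b hab (.inl hWadd) hD'P
    ⟨k + 1, hY'.projDimLT_iff.mp (hk.mono (by lia))⟩
  exact hY'.projDimLT_iff.mpr (hY'n.mono n.le_succ)

end IgusaTodorov

section ProjectiveCovers

variable {Λ : Type u} [Ring Λ]

theorem IsSyzygyOf.isWeakSyzygy {K M : ModuleCat.{u} Λ} (h : IsSyzygyOf Λ K M) :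
    IsWeakSyzygy Λ K M :=
  have ⟨P, g, hproj, hfin, hg, _, ⟨e⟩⟩ := h
  ⟨P, _, _, hproj, hfin, _, g, (IsSES.of_surjective hg).equiv_left e⟩

theorem IsNthSyzygy.isWeakNthSyzygy {n : ℕ} {K M : ModuleCat.{u} Λ} (h : IsNthSyzygy Λ n K M) :
    IsWeakNthSyzygy Λ n K M := by
  induction n generalizing K with
  | zero => exact h
  | succ n ih =>
    obtain ⟨K', hK', hK⟩ := h
    exact ⟨K', _, _, ih hK', hK.isWeakSyzygy⟩

namespace IsSuperfluous

variable {P : ModuleCat.{u} Λ}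

theorem apply_mem_jacobsonRad {N : Submodule Λ P} (hN : IsSuperfluous Λ N) (φ : P →ₗ[Λ] Λ) {x : P}
    (hx : x ∈ N) : φ x ∈ jacobsonRad Λ := by
  refine Submodule.mem_sInf.mpr fun (I : Ideal Λ) (hI : I.IsMaximal) => ?_
  by_contra hφ
  have hlt : I < I ⊔ N.map φ := left_lt_sup.mpr fun hle => hφ (hle ⟨x, hx, rfl⟩)
  have hsup : Submodule.comap φ I ⊔ N = ⊤ := by
    refine eq_top_iff.mpr fun y _ => ?_
    have hy : φ y ∈ I ⊔ N.map φ := hI.out.2 _ hlt ▸ Submodule.mem_top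
    obtain ⟨a, ha, _, ⟨z, hz, rfl⟩, hab⟩ := Submodule.mem_sup.mp hy
    refine Submodule.mem_sup.mpr ⟨y - z, ?_, z, hz, sub_add_cancel y z⟩
    rwa [Submodule.mem_comap, map_sub, ← hab, add_sub_cancel_right]
  exact hφ (hN _ hsup ▸ Submodule.mem_top : x ∈ Submodule.comap φ I)

theorem exists_ker_equiv_mem_jacobsonRad [Module.Projective Λ P] [Module.Finite Λ P] {n : ℕ}
    {g : P →ₗ[Λ] Fin n → Λ} (hg : IsSuperfluous Λ (LinearMap.ker g)) :
    ∃ (k : ℕ) (F : (Fin k → Λ) →ₗ[Λ] Fin k ⊕ Fin n → Λ),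
      Nonempty (LinearMap.ker F ≃ₗ[Λ] LinearMap.ker g) ∧
      ∀ y ∈ LinearMap.ker F, ∀ t, y t ∈ jacobsonRad Λ := by
  obtain ⟨k, p, hp⟩ := Module.Finite.exists_fin' Λ P
  obtain ⟨i, hpi⟩ := Module.projective_lifting_property p LinearMap.id hp
  replace hpi (x : P) : p (i x) = x := LinearMap.congr_fun hpi x
  let F : (Fin k → Λ) →ₗ[Λ] Fin k ⊕ Fin n → Λ :=
    (LinearEquiv.sumArrowLequivProdArrow (Fin k) (Fin n) Λ Λ).symm.toLinearMap ∘ₗ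
      (LinearMap.id - i ∘ₗ p).prod (g ∘ₗ p)
  have hF (y : Fin k → Λ) : y ∈ LinearMap.ker F ↔ i (p y) = y ∧ g (p y) = 0 := by
    rw [LinearEquiv.ker_comp, LinearMap.ker_prod, Submodule.mem_inf, LinearMap.mem_ker,
      LinearMap.mem_ker, LinearMap.sub_apply, sub_eq_zero, eq_comm]
    rfl
  refine ⟨k, F, ⟨LinearEquiv.ofLinearMap
    (p.restrict fun y hy => ((hF y).mp hy).2)
    (i.restrict fun x hx => (hF _).mpr ⟨by rw [hpi], by rw [hpi]; exact hx⟩)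
    (LinearMap.ext fun x => Subtype.ext (hpi x))
    (LinearMap.ext fun y => Subtype.ext ((hF y).mp y.2).1)⟩, fun y hy t => ?_⟩
  obtain ⟨hiy, hgy⟩ := (hF y).mp hy
  rw [← hiy]
  exact hg.apply_mem_jacobsonRad (LinearMap.proj t ∘ₗ i) hgy

end IsSuperfluous

theorem exists_projective_le_of_sup_ker_eq_top {P M : Type*} [AddCommGroup P] [Module Λ P]
    [AddCommGroup M] [Module Λ M] [Module.Projective Λ P] [IsNoetherian Λ P] [IsArtinian Λ P]
    {g : P →ₗ[Λ] M} (hg : Function.Surjective g) {L : Submodule Λ P}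
    (hL : L ⊔ LinearMap.ker g = ⊤) :
    ∃ U ≤ L, Module.Projective Λ U ∧ Function.Surjective (g ∘ₗ U.subtype) := by
  have hgL : Function.Surjective (g ∘ₗ L.subtype) := by
    rw [← LinearMap.range_eq_top, LinearMap.range_comp, Submodule.range_subtype]
    exact (LinearMap.map_eq_top_iff (LinearMap.range_eq_top.mpr hg)).mpr hL
  obtain ⟨h, hh⟩ := Module.projective_lifting_property (g ∘ₗ L.subtype) g hgL
  let f : Module.End Λ P := L.subtype ∘ₗ h
  have hgf_one : g ∘ₗ f = g := hh
  have hgf (m : ℕ) : g ∘ₗ (f ^ m) = g := by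
    induction m with
    | zero => rfl
    | succ m ih =>
      rw [pow_succ', Module.End.mul_eq_comp, ← LinearMap.comp_assoc, hgf_one, ih]
  obtain ⟨m, hcompl, hm⟩ :=
    (f.eventually_isCompl_ker_pow_range_pow.and (Filter.eventually_ge_atTop 1)).exists
  obtain ⟨i, p, hpi⟩ := IsSummand.of_isCompl hcompl.symm
  refine ⟨LinearMap.range (f ^ m), ?_, .of_split i p hpi, fun y => ?_⟩
  · obtain ⟨m, rfl⟩ := Nat.exists_eq_add_of_le' hm
    rintro _ ⟨x, rfl⟩
    rw [pow_succ']
    exact (h ((f ^ m) x)).2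
  · obtain ⟨x, rfl⟩ := hg y
    exact ⟨⟨(f ^ m) x, x, rfl⟩, LinearMap.congr_fun (hgf m) x⟩

variable [IsArtinianRing Λ]

theorem exists_surjective_isSuperfluous_ker (M : ModuleCat.{u} Λ) [Module.Finite Λ M] :
    ∃ (P : ModuleCat.{u} Λ) (g : P →ₗ[Λ] M), Module.Projective Λ P ∧ Module.Finite Λ P ∧
      Function.Surjective g ∧ IsSuperfluous Λ (LinearMap.ker g) := by
  obtain ⟨n, f, hf⟩ := Module.Finite.exists_fin' Λ M
  obtain ⟨P, ⟨hP, hfP⟩, hmin⟩ := exists_minimal_of_wellFoundedLT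
    (fun U : Submodule Λ (Fin n → Λ) =>
      Module.Projective Λ U ∧ Function.Surjective (f ∘ₗ U.subtype))
    ⟨⊤, .of_equiv Submodule.topEquiv.symm, hf.comp Submodule.topEquiv.surjective⟩
  refine ⟨.of Λ P, f ∘ₗ P.subtype, hP, inferInstance, hfP, fun L hL => ?_⟩
  obtain ⟨U, hUL, _, hU⟩ := exists_projective_le_of_sup_ker_eq_top hfP hL
  let e := P.equivSubtypeMap U
  have hPU : P ≤ U.map P.subtype := hmin ⟨.of_equiv e, fun y => by
    obtain ⟨x, rfl⟩ := hU y
    exact ⟨e x, rfl⟩⟩ (Submodule.map_subtype_le P U)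
  exact eq_top_iff.mpr fun x _ => by
    obtain ⟨y, hy, hyx⟩ := hPU x.2
    exact hUL (Subtype.ext hyx ▸ hy)

theorem IsNthSyzygy.exists_of_finite (n : ℕ) (M : ModuleCat.{u} Λ) [Module.Finite Λ M] :
    ∃ K, IsNthSyzygy Λ n K M := by
  induction n with
  | zero => exact ⟨M, ⟨.refl Λ M⟩⟩
  | succ n ih =>
    obtain ⟨K, hK⟩ := ih
    have := hK.isWeakNthSyzygy.finite
    obtain ⟨P, g, hP, hfin, hg, hker⟩ := exists_surjective_isSuperfluous_ker K
    exact ⟨.of Λ (LinearMap.ker g), K, hK, P, g, hP, hfin, hg, hker, ⟨.refl Λ _⟩⟩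

theorem exists_ker_isWeakNthSyzygy_two (M : Type u) [AddCommGroup M] [Module Λ M]
    [Module.Finite Λ M] :
    ∃ (k n : ℕ) (F : (Fin k → Λ) →ₗ[Λ] Fin k ⊕ Fin n → Λ),
      IsWeakNthSyzygy Λ 2 (LinearMap.ker F) M ∧
      ∀ y ∈ LinearMap.ker F, ∀ t, y t ∈ jacobsonRad Λ := by
  obtain ⟨n, f, hf⟩ := Module.Finite.exists_fin' Λ M
  obtain ⟨P, g, _, _, hg, hker⟩ :=
    exists_surjective_isSuperfluous_ker (.of Λ (LinearMap.ker f))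
  have hker_eq : LinearMap.ker ((LinearMap.ker f).subtype ∘ₗ g) = LinearMap.ker g :=
    LinearMap.ker_comp_of_ker_eq_bot g (Submodule.ker_subtype _)
  obtain ⟨k, F, ⟨e⟩, hF⟩ := (hker_eq ▸ hker).exists_ker_equiv_mem_jacobsonRad
  refine ⟨k, n, F, ⟨LinearMap.ker f, _, _, ⟨M, _, _, ⟨.refl Λ M⟩, .of_surjective hf⟩, ?_⟩, hF⟩
  exact ⟨P, _, _, ‹_›, ‹_›, _, g,
    (IsSES.of_surjective hg).equiv_left (e ≪≫ₗ LinearEquiv.ofEq _ _ hker_eq)⟩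

end ProjectiveCovers

section Subalgebras

variable {C Γ : Type u} [CommRing C] [Ring Γ] [Algebra C Γ] {S T : Subalgebra C Γ}

theorem MemAdd.restrictScalars {N X : Type*} [AddCommGroup N] [Module Γ N] [AddCommGroup X]
    [Module Γ X] (h : MemAdd Γ N X) : MemAdd S N X :=
  have ⟨k, i, p, hpi⟩ := h
  ⟨k, i.restrictScalars S, p.restrictScalars S, LinearMap.ext fun x => LinearMap.congr_fun hpi x⟩

/-- The `S`-module `X` carries a `T`-module structure that agrees with the given one on `S ∩ T`
and is annihilated by the elements of `Q`. For `S ≤ T` these are the restrictions to `S` of the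
modules over the quotient of `T` by the two-sided ideal generated by `Q`. -/
def IsRestrictionOfAnnihilated (S T : Subalgebra C Γ) (Q : Set Γ) (X : Type*) [AddCommGroup X]
    [Module S X] : Prop :=
  ∃ _ : Module T X,
    (∀ (a : T) (ha : (a : Γ) ∈ S) (x : X), a • x = (⟨a, ha⟩ : S) • x) ∧
    ∀ p ∈ Q, ∀ (hp : p ∈ T) (x : X), (⟨p, hp⟩ : T) • x = 0

theorem exists_isSES_isRestrictionOfAnnihilated {V : Type u} [AddCommGroup V] [Module Γ V]
    (Y : Submodule S V) (hY : ∀ a ∈ T, ∀ y ∈ Y, a • y ∈ Y) {Q : Set Γ}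
    (hQ : ∀ p ∈ Q, ∀ a : Γ, a * p ∈ T) :
    ∃ (D : Submodule Γ V) (Z : Type u) (_ : AddCommGroup Z) (_ : Module S Z) (i : D →ₗ[S] Y)
      (g : Y →ₗ[S] Z), IsSES i g ∧ IsRestrictionOfAnnihilated S T Q Z := by
  let D : Submodule Γ V := Submodule.span Γ {v | ∃ p ∈ Q, ∃ y ∈ Y, p • y = v}
  have hDY : D.restrictScalars S ≤ Y := by
    intro d hd
    suffices h : ∀ a : Γ, a • d ∈ Y from one_smul Γ d ▸ h 1
    induction hd using Submodule.span_induction with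
    | mem v hv =>
      obtain ⟨p, hp, y, hy, rfl⟩ := hv
      exact fun a => mul_smul a p y ▸ hY _ (hQ p hp a) y hy
    | zero => simp only [smul_zero, zero_mem, implies_true]
    | add v w _ _ hv hw => exact fun a => smul_add a v w ▸ add_mem (hv a) (hw a)
    | smul b v _ hv => exact fun a => mul_smul a b v ▸ hv (a * b)
  let Z : Submodule S (V ⧸ D) := Y.map (D.mkQ.restrictScalars S)
  let _ : SMul T Z := ⟨fun a z => ⟨a • z, by
    obtain ⟨_, y, hy, rfl⟩ := z
    exact ⟨a • y, hY a a.2 y hy, rfl⟩⟩⟩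
  refine ⟨D, Z, _, _, Submodule.inclusion hDY, (D.mkQ.restrictScalars S).submoduleMap Y,
    .of_forall (Submodule.inclusion_injective hDY) (LinearMap.submoduleMap_surjective _ Y) ?_ ?_,
    Z.subtype_injective.module T Z.subtype.toAddMonoidHom fun _ _ => rfl, fun _ _ _ => rfl, ?_⟩
  · exact fun d => Subtype.ext ((Submodule.Quotient.mk_eq_zero D).mpr d.2)
  · exact fun y hy =>
      ⟨⟨y, (Submodule.Quotient.mk_eq_zero D).mp (congrArg Subtype.val hy)⟩, rfl⟩
  · rintro p hp hpT ⟨_, y, hy, rfl⟩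
    exact Subtype.ext ((Submodule.Quotient.mk_eq_zero D).mpr
      (Submodule.subset_span ⟨p, hp, y, hy, rfl⟩))

theorem coe_apply_eq_mul_coe_apply {ι : Type*} [Finite ι] (f : (ι → S) →ₗ[S] S) {a : Γ}
    {y z : ι → S} (hz : ∀ t, (z t : Γ) = a * y t) : (f z : Γ) = a * f y := by
  classical
  have := Fintype.ofFinite ι
  rw [f.pi_apply_eq_sum_univ z, f.pi_apply_eq_sum_univ y]
  simp only [smul_eq_mul, AddSubmonoidClass.coe_finsetSum, MulMemClass.coe_mul, hz, Finset.mul_sum,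
    mul_assoc]

theorem exists_isWeakNthSyzygy_two_smul_mem [IsArtinianRing S]
    (hrad : ∀ x ∈ radSet S, ∀ a ∈ T, a * x ∈ radSet S) (X : Type u) [AddCommGroup X] [Module S X]
    [Module.Finite S X] :
    ∃ (k : ℕ) (Y : Submodule S (Fin k → Γ)), IsWeakNthSyzygy S 2 Y X ∧
      ∀ a ∈ T, ∀ y ∈ Y, a • y ∈ Y := by
  obtain ⟨k, n, F, ⟨K, _, _, hK, hF⟩, hrad_F⟩ := exists_ker_isWeakNthSyzygy_two (Λ := S) X
  let ι : (Fin k → S) →ₗ[S] Fin k → Γ := (LinearMap.toSpanSingleton S Γ 1).compLeft (Fin k)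
  have hι (y : Fin k → S) (t : Fin k) : ι y t = y t := mul_one (y t : Γ)
  have hι_inj : Function.Injective ι := fun y z h =>
    funext fun t => Subtype.ext (hι y t ▸ hι z t ▸ congrFun h t)
  refine ⟨k, (LinearMap.ker F).map ι, ⟨K, _, _, hK, ?_⟩, ?_⟩
  · obtain ⟨P, _, _, _, _, j, q, hjq⟩ := hF
    exact ⟨P, _, _, ‹_›, ‹_›, _, q,
      hjq.equiv_left (Submodule.equivMapOfInjective ι hι_inj (LinearMap.ker F)).symm⟩
  · rintro a ha _ ⟨y, hy, rfl⟩
    choose z _ hz using fun t => hrad _ ⟨y t, hrad_F y hy t, rfl⟩ a ha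
    refine ⟨z, funext fun j => Subtype.ext ?_, funext fun t => ?_⟩
    · have hFy : F y j = 0 := congrFun hy j
      exact (coe_apply_eq_mul_coe_apply (LinearMap.proj j ∘ₗ F) hz).trans <| by
        rw [LinearMap.comp_apply, LinearMap.proj_apply, hFy, ZeroMemClass.coe_zero, mul_zero]
    · rw [hι, hz, Pi.smul_apply, hι, smul_eq_mul]

theorem OneSyzygyFinite.exists_forall_memAdd_submodule {Λ : Type u} [Ring Λ] [IsArtinianRing Λ]
    (h : OneSyzygyFinite Λ) : ∃ N : ModuleCat.{u} Λ, Module.Finite Λ N ∧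
      ∀ (k : ℕ) (D : Submodule Λ (Fin k → Λ)), MemAdd Λ N D := by
  obtain ⟨N, hN, h⟩ := h
  refine ⟨.of Λ (N × Λ), inferInstance, fun k D => ?_⟩
  obtain ⟨K, hK⟩ := IsNthSyzygy.exists_of_finite 1 (.of Λ ((Fin k → Λ) ⧸ D))
  have hKN : MemAdd Λ N K := h _ inferInstance K hK
  obtain ⟨K', ⟨e⟩, hKK'⟩ := hK
  have hD : IsWeakSyzygy Λ D ((Fin k → Λ) ⧸ D) :=
    ⟨_, _, _, inferInstance, inferInstance, _, _, .of_submodule D⟩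
  obtain ⟨P, P', _, _, _, _, _, _, _, _, ⟨f⟩⟩ :=
    StabIso.of_isWeakSyzygy hD hKK'.isWeakSyzygy (.of_equiv e.symm)
  exact .of_isSummand (IsSummand.fst.trans (.of_equiv f)) (hKN.inl.prod (MemAdd.of_projective.inr))

theorem mul_prod_ofFn_rev_mem {M : Type*} [Monoid M] {n : ℕ} (E : ℕ → Set M) (x : Fin n → M)
    (hx : ∀ j : Fin n, ∀ a ∈ E (j + 1), a * x j ∈ E j) {a : M} (ha : a ∈ E n) :
    a * (List.ofFn fun j => x j.rev).prod ∈ E 0 := by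
  induction n generalizing a with
  | zero => simpa using ha
  | succ n ih =>
    have h := ih (fun j => x j.castSucc) (fun j => hx j.castSucc) (hx (Fin.last n) a ha)
    simpa [List.ofFn_succ, Fin.rev_succ, mul_assoc] using h

theorem finFinDim_of_oneSyzygyFinite [IsArtinianRing S] [Module.Finite S Γ]
    (hrad : ∀ x ∈ radSet S, ∀ a ∈ T, a * x ∈ radSet S) {Q : Set Γ}
    (hQ : ∀ p ∈ Q, ∀ a : Γ, a * p ∈ T) (hΓ : OneSyzygyFinite Γ)
    (hTQ : SyzygyFiniteClass S
      fun X => Module.Finite S X ∧ IsRestrictionOfAnnihilated S T Q X) :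
    FinFinDim S := by
  have : IsArtinianRing Γ := isArtinian_of_tower S inferInstance
  obtain ⟨N, _, hN⟩ := hΓ.exists_forall_memAdd_submodule
  obtain ⟨m, M, _, hM⟩ := hTQ
  have : Module.Finite S N := .trans Γ N
  obtain ⟨n, hn⟩ := exists_forall_projDimLT_middle_of_memAdd (Λ := S) m N M
  refine ⟨n + 2, fun X _ ⟨k, hk⟩ => ?_⟩
  obtain ⟨l, Y, hYX, hTY⟩ := exists_isWeakNthSyzygy_two_smul_mem hrad X
  obtain ⟨D, Z, _, _, i, g, hig, hZ⟩ := exists_isSES_isRestrictionOfAnnihilated Y hTY hQ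
  have := hYX.finite
  have : Module.Finite S Z := .of_surjective g hig.surjective
  obtain ⟨Z', hZ'⟩ := IsNthSyzygy.exists_of_finite m (.of S Z)
  have hY : ProjDimLT S Y (k + 1) := hYX.projDimLT_iff.mp
    ((projDimLE_iff_projDimLT.mp hk).mono (by lia))
  have := hn D Y Z Z' i g hig (hN l D).restrictScalars hZ'.isWeakNthSyzygy
    (hM _ ⟨‹_›, hZ⟩ Z' hZ') ⟨_, hY⟩
  rw [projDimLE_iff_projDimLT]
  exact hYX.projDimLT_iff.mpr (this.mono n.le_succ)

end Subalgebras

theorem statement14_general {C Γ : Type u} [CommRing C] [Ring Γ] [Algebra C Γ] (s : ℕ) (hs : 0 < s)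
    (A' : Fin (s + 1) → Subalgebra C Γ) [IsArtinianRing (A' 0)] [Module.Finite (A' 0) Γ]
    (htop : A' (Fin.last s) = ⊤)
    (I : Fin s → Set Γ)
    (hIsub : ∀ j : Fin s, I j ⊆ (A' j.castSucc : Set Γ))
    (hIleft : ∀ j : Fin s, ∀ x ∈ I j, ∀ a ∈ A' j.succ, a * x ∈ I j)
    (hI0 : I ⟨0, hs⟩ = radSet (A' 0))
    (h1 : OneSyzygyFinite Γ)
    (hq : SyzygyFiniteClass ↥(A' 0) (fun X => Module.Finite ↥(A' 0) X ∧
      ∃ sm : ↥(A' 1) → X → X,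
        (∀ v : X, sm 1 v = v) ∧
        (∀ (a b : ↥(A' 1)) (v : X), sm (a * b) v = sm a (sm b v)) ∧
        (∀ (a : ↥(A' 1)) (v w : X), sm a (v + w) = sm a v + sm a w) ∧
        (∀ (a b : ↥(A' 1)) (v : X), sm (a + b) v = sm a v + sm b v) ∧
        (∀ (a : ↥(A' 1)) (hb : (a : Γ) ∈ A' 0) (v : X),
          sm a v = (⟨(a : Γ), hb⟩ : ↥(A' 0)) • v) ∧
        (∀ x : Fin (s - 1) → Γ,
          (∀ j : Fin (s - 1), x j ∈ I ⟨j.1 + 1, Nat.add_lt_of_lt_sub j.2⟩) →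
          ∀ (hm : (List.ofFn fun j : Fin (s - 1) => x j.rev).prod ∈ A' 1) (v : X),
            sm (⟨(List.ofFn fun j : Fin (s - 1) => x j.rev).prod, hm⟩ : ↥(A' 1)) v = 0))) :
    FinFinDim ↥(A' 0) := by
  obtain ⟨n, rfl⟩ : ∃ n, s = n + 1 := ⟨s - 1, by lia⟩
  have hrad : ∀ x ∈ radSet (A' 0), ∀ a ∈ A' 1, a * x ∈ radSet (A' 0) := hI0 ▸ hIleft 0
  obtain ⟨m, M, hM, hMX⟩ := hq
  refine finFinDim_of_oneSyzygyFinite hrad (Q := {p | ∃ x : Fin n → Γ, (∀ j, x j ∈ I j.succ) ∧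
    (List.ofFn fun j => x j.rev).prod = p}) ?_ h1 ⟨m, M, hM, fun X ⟨hX, _, hX_eq, hX_zero⟩ =>
      hMX X ⟨hX, (· • ·), one_smul _, mul_smul, smul_add, add_smul, hX_eq,
        fun x hx => hX_zero _ ⟨x, hx, rfl⟩⟩⟩
  rintro _ ⟨x, hx, rfl⟩ a
  have hmem : a * (List.ofFn fun j => x j.rev).prod ∈
      {b : Γ | ∀ h : 0 < n + 1, b ∈ A' (Fin.succ ⟨0, h⟩)} :=
    mul_prod_ofFn_rev_mem (fun j => {b : Γ | ∀ h : j < n + 1, b ∈ A' (Fin.succ ⟨j, h⟩)}) x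
      (fun j b hb _ => hIsub j.succ (hIleft j.succ _ (hx j) b (hb _)))
      fun _ => htop ▸ Algebra.mem_top
  exact hmem n.succ_pos

/-- Chain of subalgebras `B = A₀ ⊆ ⋯ ⊆ A_s = A` with `I_{i-1}` an ideal of
`A_{i-1}` which is a left ideal of `A_i`, and `I₀ = rad B`.  If `A` is 1-syzygy-finite and
`A₁/(I_{s-1} ⋯ I₁)` is `B`-syzygy-finite (its modules, restricted to `B`-modules along
`B ⊆ A₁`), then `fin.dim B < ∞`. -/
theorem statement14 (s : ℕ) (hs : 0 < s)
    (A' : Fin (s + 1) → Subalgebra R A)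
    (hchain : ∀ j : Fin s, A' j.castSucc ≤ A' j.succ)
    (htop : A' (Fin.last s) = ⊤)
    (I : Fin s → Set A)
    (hIsub : ∀ j : Fin s, I j ⊆ (A' j.castSucc : Set A))
    (hIzero : ∀ j : Fin s, (0 : A) ∈ I j)
    (hIadd : ∀ j : Fin s, ∀ x ∈ I j, ∀ y ∈ I j, x + y ∈ I j)
    (hIneg : ∀ j : Fin s, ∀ x ∈ I j, -x ∈ I j)
    (hIright : ∀ j : Fin s, ∀ x ∈ I j, ∀ b ∈ A' j.castSucc, x * b ∈ I j)
    (hIleft : ∀ j : Fin s, ∀ x ∈ I j, ∀ a ∈ A' j.succ, a * x ∈ I j)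
    (hI0 : I ⟨0, hs⟩ = radSet (A' 0))
    (h1 : OneSyzygyFinite A)
    (hq : SyzygyFiniteClass ↥(A' 0) (fun X => Module.Finite ↥(A' 0) X ∧
      ∃ sm : ↥(A' 1) → X → X,
        (∀ v : X, sm 1 v = v) ∧
        (∀ (a b : ↥(A' 1)) (v : X), sm (a * b) v = sm a (sm b v)) ∧
        (∀ (a : ↥(A' 1)) (v w : X), sm a (v + w) = sm a v + sm a w) ∧
        (∀ (a b : ↥(A' 1)) (v : X), sm (a + b) v = sm a v + sm b v) ∧
        (∀ (a : ↥(A' 1)) (hb : (a : A) ∈ A' 0) (v : X),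
          sm a v = (⟨(a : A), hb⟩ : ↥(A' 0)) • v) ∧
        (∀ x : Fin (s - 1) → A,
          (∀ j : Fin (s - 1), x j ∈ I ⟨j.1 + 1, by omega⟩) →
          ∀ (hm : (List.ofFn fun j : Fin (s - 1) => x j.rev).prod ∈ A' 1) (v : X),
            sm (⟨(List.ofFn fun j : Fin (s - 1) => x j.rev).prod, hm⟩ : ↥(A' 1)) v = 0))) :
    FinFinDim ↥(A' 0) := by
  have : Module.Finite R ↥(A' 0) := inferInstanceAs (Module.Finite R (A' 0).toSubmodule)
  have : IsArtinianRing ↥(A' 0) := .of_finite R _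
  have : Module.Finite ↥(A' 0) A := .of_restrictScalars_finite R _ _
  exact statement14_general s hs A' htop I hIsub hIleft hI0 h1 hq
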